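/- arXiv:1312.6292 — 6 statements merged into one kernel-verified Lean document; each statement's English description precedes it below -/
import Mathlib

section
/- Let V₁ and W be finite-dimensional real vector spaces, where W carries a nondegenerate symmetric bilinear form of type (r, r) with r ≤ 5. Let σ : V₁ × V₁ → W be a nonzero flat symmetric bilinear map. If dim N(σ) < dim V₁ − 2r, then S(σ) is a degenerate subspace of W. -/
open Module Submodule

/-- A nondegenerate symmetric bilinear form `B` on `W` has type `(r, q)` if `W` has an
orthogonal basis consisting of `r` vectors of negative square length and `q` vectors of
positive square length. -/
def BilinFormHasType {W : Type*} [AddCommGroup W] [Module ℝ W]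
    (B : LinearMap.BilinForm ℝ W) (r q : ℕ) : Prop :=
  ∃ b : Basis (Fin r ⊕ Fin q) ℝ W,
    (∀ i j, i ≠ j → B (b i) (b j) = 0) ∧
    (∀ i, B (b (Sum.inl i)) (b (Sum.inl i)) < 0) ∧
    (∀ j, 0 < B (b (Sum.inr j)) (b (Sum.inr j)))

lemma aux_li {ι E : Type*} [Fintype ι] [AddCommGroup E] [Module ℝ E]
    (a b c : ι → E) (ha : LinearIndependent ℝ a) :
    {t : ℝ | ¬ LinearIndependent ℝ (fun i => a i + t • b i + t ^ 2 • c i)}.Finite := by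
  classical
  have hinj : LinearMap.ker (Fintype.linearCombination ℝ a) = ⊥ := by
    rw [LinearMap.ker_eq_bot]
    exact ha.fintypeLinearCombination_injective
  obtain ⟨φ, hφ⟩ := LinearMap.exists_leftInverse_of_injective _ hinj
  have hφa : ∀ i, φ (a i) = Pi.single i 1 := by
    intro i
    have := LinearMap.congr_fun hφ (Pi.single i 1)
    simpa [Fintype.linearCombination_apply_single] using this
  let P : Matrix ι ι (Polynomial ℝ) := Matrix.of fun i j =>
    Polynomial.C (φ (a i) j) + Polynomial.X * Polynomial.C (φ (b i) j)
      + Polynomial.X ^ 2 * Polynomial.C (φ (c i) j)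
  have hev : ∀ t : ℝ, P.det.eval t =
      (Matrix.of (fun i j => φ (a i + t • b i + t ^ 2 • c i) j)).det := by
    intro t
    have := (Polynomial.evalRingHom t).map_det P
    rw [Polynomial.coe_evalRingHom] at this
    rw [this]
    congr 1
    ext i j
    simp only [P, RingHom.mapMatrix_apply, Matrix.map_apply, Matrix.of_apply, Polynomial.coe_evalRingHom]
    simp
    ring
  have hne : P.det ≠ 0 := by
    intro h0
    have h1 := hev 0
    have h2 : (Matrix.of (fun i j => φ (a i + (0:ℝ) • b i + (0:ℝ) ^ 2 • c i) j)) =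
        (1 : Matrix ι ι ℝ) := by
      ext i j
      simp [hφa, Matrix.one_apply, Pi.single_apply, eq_comm]
    rw [h2, h0] at h1
    simp at h1
  refine (P.det.roots.toFinset.finite_toSet).subset ?_
  intro t ht
  by_contra hroot
  apply ht
  have hdet : (Matrix.of (fun i j => φ (a i + t • b i + t ^ 2 • c i) j)).det ≠ 0 := by
    rw [← hev]
    intro h
    exact hroot (by simp [Polynomial.mem_roots hne, h, Polynomial.IsRoot])
  have hli : LinearIndependent ℝ (fun i => φ (a i + t • b i + t ^ 2 • c i)) := by
    have := Matrix.linearIndependent_rows_of_det_ne_zero hdet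
    exact this
  exact LinearIndependent.of_comp φ hli

lemma aux_basis {E F : Type*} [AddCommGroup E] [Module ℝ E]
    [AddCommGroup F] [Module ℝ F] [FiniteDimensional ℝ F] (A : E →ₗ[ℝ] F) :
    ∃ v : Fin (finrank ℝ (LinearMap.range A)) → E, LinearIndependent ℝ (fun i => A (v i)) ∧
      span ℝ (Set.range (fun i => A (v i))) = LinearMap.range A := by
  let bs := Module.finBasis ℝ (LinearMap.range A)
  choose v hv using fun i => (bs i).2
  refine ⟨v, ?_, ?_⟩
  · have := bs.linearIndependent.map' (LinearMap.range A).subtype (by simp)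
    simpa [hv, Function.comp_def] using this
  · have h := congrArg (Submodule.map (LinearMap.range A).subtype) bs.span_eq
    rw [Submodule.map_span, ← Set.range_comp] at h
    simpa [hv, Function.comp_def] using h

lemma aux_rank {E F : Type*} [AddCommGroup E] [Module ℝ E]
    [AddCommGroup F] [Module ℝ F] [FiniteDimensional ℝ F] (A0 A1 A2 : E →ₗ[ℝ] F) :
    {t : ℝ | ¬ finrank ℝ (LinearMap.range A0) ≤
      finrank ℝ (LinearMap.range (A0 + t • A1 + t ^ 2 • A2))}.Finite := by
  obtain ⟨v, hv, -⟩ := aux_basis A0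
  refine (aux_li _ (fun i => A1 (v i)) (fun i => A2 (v i)) hv).subset ?_
  intro t ht h
  apply ht
  let f : Fin (finrank ℝ (LinearMap.range A0)) → LinearMap.range (A0 + t • A1 + t ^ 2 • A2) :=
    fun i => ⟨(A0 + t • A1 + t ^ 2 • A2) (v i), ⟨v i, rfl⟩⟩
  have hf : LinearIndependent ℝ f := by
    apply LinearIndependent.of_comp (LinearMap.range (A0 + t • A1 + t ^ 2 • A2)).subtype
    simpa [Function.comp_def, f] using h
  simpa using hf.fintype_card_le_finrank

lemma aux_moore {E F : Type*} [AddCommGroup E] [Module ℝ E]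
    [AddCommGroup F] [Module ℝ F] [FiniteDimensional ℝ F] (A0 A1 A2 : E →ₗ[ℝ] F)
    (hmax : ∀ t : ℝ, finrank ℝ (LinearMap.range (A0 + t • A1 + t ^ 2 • A2)) ≤
      finrank ℝ (LinearMap.range A0)) (κ : E) (w : F) (m : ℕ)
    (hw : ∀ t : ℝ, (A0 + t • A1 + t ^ 2 • A2) κ = t ^ m • w) : w ∈ LinearMap.range A0 := by
  obtain ⟨v, hv, hsp⟩ := aux_basis A0
  by_contra hnot
  rw [← hsp] at hnot
  have hli : LinearIndependent ℝ (fun o : Option (Fin (finrank ℝ (LinearMap.range A0))) =>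
      Option.casesOn' o w (fun i => A0 (v i))) := hv.option hnot
  have hfin := aux_li _ (fun o => Option.casesOn' o 0 (fun i => A1 (v i)))
    (fun o => Option.casesOn' o 0 (fun i => A2 (v i))) hli
  obtain ⟨t, ht⟩ := ((hfin.union (Set.finite_singleton (0:ℝ))).infinite_compl).nonempty
  simp only [Set.mem_compl_iff, Set.mem_union, Set.mem_ofPred_eq, Set.mem_singleton_iff,
    not_or, not_not] at ht
  obtain ⟨h, ht0⟩ := ht
  have hwr : w ∈ LinearMap.range (A0 + t • A1 + t ^ 2 • A2) := by
    refine ⟨(t ^ m)⁻¹ • κ, ?_⟩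
    rw [map_smul, hw, smul_smul, inv_mul_cancel₀ (pow_ne_zero _ ht0), one_smul]
  let f : Option (Fin (finrank ℝ (LinearMap.range A0))) →
      LinearMap.range (A0 + t • A1 + t ^ 2 • A2) :=
    fun o => Option.casesOn' o ⟨w, hwr⟩
      (fun i => ⟨(A0 + t • A1 + t ^ 2 • A2) (v i), ⟨v i, rfl⟩⟩)
  have hf : LinearIndependent ℝ f := by
    apply LinearIndependent.of_comp (LinearMap.range (A0 + t • A1 + t ^ 2 • A2)).subtype
    convert h using 1
    funext o
    cases o <;> simp [f]
  have := hf.fintype_card_le_finrank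
  have h2 := hmax t
  simp at this
  omega

/-- line-open predicates -/
def LOpen {V : Type*} [AddCommGroup V] [Module ℝ V] (P : V → Prop) : Prop :=
  ∀ X Z, P X → {t : ℝ | ¬ P (X + t • Z)}.Finite

lemma LOpen.and {V : Type*} [AddCommGroup V] [Module ℝ V] {P Q : V → Prop}
    (hP : LOpen P) (hQ : LOpen Q) : LOpen (fun X => P X ∧ Q X) := by
  intro X Z h
  refine ((hP X Z h.1).union (hQ X Z h.2)).subset ?_
  intro t ht
  simp only [Set.mem_ofPred_eq, Set.mem_union] at *
  tauto

lemma LOpen.inter {V : Type*} [AddCommGroup V] [Module ℝ V] {P Q : V → Prop}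
    (hP : LOpen P) (hQ : LOpen Q) (h1 : ∃ X, P X) (h2 : ∃ X, Q X) : ∃ X, P X ∧ Q X := by
  obtain ⟨X, hX⟩ := h1
  obtain ⟨Y, hY⟩ := h2
  have f1 := hP X (Y - X) hX
  have f2 := hQ Y (X - Y) hY
  have f3 := f2.preimage (f := fun t : ℝ => 1 - t) (fun a _ b _ h => by simpa using h)
  obtain ⟨t, ht⟩ := ((f1.union f3).infinite_compl).nonempty
  simp only [Set.mem_compl_iff, Set.mem_union, Set.mem_ofPred_eq, Set.mem_preimage,
    not_or, not_not] at ht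
  refine ⟨_, ht.1, ?_⟩
  convert ht.2 using 1
  module

lemma LOpen.fun {V : Type*} [AddCommGroup V] [Module ℝ V] (l : V →ₗ[ℝ] ℝ) :
    LOpen (fun X => l X ≠ 0) := by
  intro X Z h
  refine (Set.finite_singleton (- l X / l Z)).subset ?_
  intro t ht
  simp only [Set.mem_ofPred_eq, not_not, map_add, map_smul, smul_eq_mul, ne_eq,
    Set.mem_singleton_iff] at *
  have : l Z ≠ 0 := by
    rintro h0
    rw [h0] at ht
    apply h; linarith
  field_simp
  linarith

lemma LOpen.rank {V E F : Type*} [AddCommGroup V] [Module ℝ V] [AddCommGroup E] [Module ℝ E]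
    [AddCommGroup F] [Module ℝ F] [FiniteDimensional ℝ F] (A : V → E →ₗ[ℝ] F)
    (hA : ∀ X Z, ∃ A1 A2, ∀ t : ℝ, A (X + t • Z) = A X + t • A1 + t ^ 2 • A2) (k : ℕ) :
    LOpen (fun X => k ≤ finrank ℝ (LinearMap.range (A X))) := by
  intro X Z h
  obtain ⟨A1, A2, h12⟩ := hA X Z
  refine (aux_rank (A X) A1 A2).subset ?_
  intro t ht
  simp only [Set.mem_ofPred_eq] at *
  rw [h12] at ht
  omega

lemma exists_max_rank {V E F : Type*} [AddCommGroup V] [AddCommGroup E] [Module ℝ E]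
    [AddCommGroup F] [Module ℝ F] [FiniteDimensional ℝ F] (A : V → E →ₗ[ℝ] F) :
    ∃ k, (∃ X, k ≤ finrank ℝ (LinearMap.range (A X))) ∧
      ∀ X, finrank ℝ (LinearMap.range (A X)) ≤ k := by
  let f : V → ℕ := fun X => finrank ℝ (LinearMap.range (A X))
  have hb : BddAbove (Set.range f) := by
    refine ⟨finrank ℝ F, ?_⟩
    rintro _ ⟨X, rfl⟩
    exact Submodule.finrank_le _
  obtain ⟨X, hX⟩ := Nat.sSup_mem (Set.range_nonempty f) hb
  refine ⟨_, ⟨X, hX.ge⟩, fun Y => le_csSup hb ⟨Y, rfl⟩⟩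

/-- Nondegenerate flat systems without nullity. -/
structure FS {V W : Type*} [AddCommGroup V] [Module ℝ V] [AddCommGroup W] [Module ℝ W]
    (B : LinearMap.BilinForm ℝ W) (σ : V →ₗ[ℝ] V →ₗ[ℝ] W) : Prop where
  bs : ∀ x y, B x y = B y x
  s : ∀ X Y, σ X Y = σ Y X
  fl : ∀ X Y Z U, B (σ X Y) (σ Z U) = B (σ X U) (σ Y Z)
  nd : ∀ w ∈ span ℝ {w | ∃ X Y, σ X Y = w}, (∀ Y Z, B w (σ Y Z) = 0) → w = 0
  nn : ∀ n, (∀ X, σ n X = 0) → n = 0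

/-- Cube data attached to a pair of vectors. -/
structure Cube {V W : Type*} [AddCommGroup V] [Module ℝ V] [AddCommGroup W] [Module ℝ W]
    (B : LinearMap.BilinForm ℝ W) (σ : V →ₗ[ℝ] V →ₗ[ℝ] W) (X Y : V)
    (κ : V) (l : V →ₗ[ℝ] ℝ) (w : W) (c : ℝ) : Prop where
  k0 : κ ≠ 0
  l0 : l ≠ 0
  c0 : c ≠ 0
  ww : B w w = 0
  kX : σ κ X = 0
  kY : σ κ Y = 0
  lX : l X = 0
  lY : l Y = 0
  kz : ∀ Z, σ κ Z = l Z • w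
  q : ∀ Z Z', B w (σ Z Z') = c * (l Z * l Z')
  un : ∀ κ', σ κ' X = 0 → σ κ' Y = 0 → ∃ a : ℝ, κ' = a • κ

section
variable {V W : Type*} [AddCommGroup V] [Module ℝ V] [AddCommGroup W] [Module ℝ W]
    {B : LinearMap.BilinForm ℝ W} {σ : V →ₗ[ℝ] V →ₗ[ℝ] W}

lemma FS.sw (h : FS B σ) (X Y Z U : V) : B (σ X Y) (σ Z U) = B (σ X Z) (σ Y U) := by
  rw [h.s Z U]; exact h.fl X Y U Z

lemma FS.nd1 (h : FS B σ) (X Y : V) (h0 : ∀ Z U, B (σ X Y) (σ Z U) = 0) : σ X Y = 0 :=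
  h.nd _ (subset_span ⟨X, Y, rfl⟩) h0

lemma FS.nd2 (h : FS B σ) (w : W) (hw : w ∈ span ℝ {w | ∃ X Y, σ X Y = w})
    (h0 : ∀ Z, B w (σ Z Z) = 0) : w = 0 := by
  apply h.nd w hw
  intro Y Z
  have := h0 (Y + Z)
  simp only [map_add, LinearMap.add_apply, h0, h.s Z Y] at this
  linarith

/-- the radical of the image of `σ X` -/
def RU (B : LinearMap.BilinForm ℝ W) (σ : V →ₗ[ℝ] V →ₗ[ℝ] W) (X : V) : Submodule ℝ W :=
  LinearMap.range (σ X) ⊓ B.orthogonal (LinearMap.range (σ X))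

lemma RU_iso (X : V) (a b : W) (ha : a ∈ RU B σ X) (hb : b ∈ RU B σ X) : B a b = 0 :=
  hb.2 a ha.1

lemma RU_span (X : V) (a : W) (ha : a ∈ RU B σ X) : a ∈ span ℝ {w | ∃ X Y, σ X Y = w} := by
  obtain ⟨Y, rfl⟩ := ha.1
  exact subset_span ⟨X, Y, rfl⟩

/-- the Hessian -/
def Hs (B : LinearMap.BilinForm ℝ W) (σ : V →ₗ[ℝ] V →ₗ[ℝ] W) (X Y : V) : V →ₗ[ℝ] Dual ℝ V :=
  σ.compr₂ (B (σ X Y))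

lemma Hs_apply (X Y Z U : V) : Hs B σ X Y Z U = B (σ X Y) (σ Z U) := rfl

lemma FS.Hs_line (h : FS B σ) (X Y : V) (t : ℝ) : Hs B σ (X + t • Y) (X + t • Y) =
    Hs B σ X X + t • ((2:ℝ) • Hs B σ X Y) + t ^ 2 • Hs B σ Y Y := by
  ext Z U
  simp only [Hs_apply, map_add, LinearMap.add_apply, LinearMap.smul_apply, map_smul,
    smul_eq_mul, h.s Y X]
  ring

/-- regular vectors -/
def Gd (B : LinearMap.BilinForm ℝ W) (σ : V →ₗ[ℝ] V →ₗ[ℝ] W) (X : V) : Prop :=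
  (∀ Y, finrank ℝ (LinearMap.range (σ Y)) ≤ finrank ℝ (LinearMap.range (σ X))) ∧
  (∀ Y, finrank ℝ (LinearMap.range (Hs B σ Y Y)) ≤ finrank ℝ (LinearMap.range (Hs B σ X X)))

lemma LOpen_congr {P Q : V → Prop} (h : LOpen P) (hPQ : ∀ X, P X ↔ Q X) : LOpen Q := by
  have : P = Q := funext fun X => propext (hPQ X)
  exact this ▸ h

lemma FS.gd [FiniteDimensional ℝ V] [FiniteDimensional ℝ W] (h : FS B σ) :
    LOpen (Gd B σ) ∧ ∃ X, Gd B σ X := by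
  obtain ⟨k, hk1, hk2⟩ := exists_max_rank (fun X => σ X)
  obtain ⟨m, hm1, hm2⟩ := exists_max_rank (fun X => Hs B σ X X)
  have o1 : LOpen (fun X => k ≤ finrank ℝ (LinearMap.range (σ X))) := by
    apply LOpen.rank (fun X => σ X)
    intro X Z
    exact ⟨σ Z, 0, fun t => by simp⟩
  have o2 : LOpen (fun X => m ≤ finrank ℝ (LinearMap.range (Hs B σ X X))) := by
    apply LOpen.rank (fun X => Hs B σ X X)
    intro X Z
    exact ⟨_, _, fun t => h.Hs_line X Z t⟩
  have e : ∀ X, (k ≤ finrank ℝ (LinearMap.range (σ X)) ∧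
      m ≤ finrank ℝ (LinearMap.range (Hs B σ X X))) ↔ Gd B σ X := by
    intro X
    constructor
    · rintro ⟨a, b⟩
      exact ⟨fun Y => (hk2 Y).trans a, fun Y => (hm2 Y).trans b⟩
    · rintro ⟨a, b⟩
      obtain ⟨Y, hY⟩ := hk1
      obtain ⟨Z, hZ⟩ := hm1
      exact ⟨hY.trans (a Y), hZ.trans (b Z)⟩
  refine ⟨LOpen_congr (o1.and o2) e, ?_⟩
  obtain ⟨X, hX⟩ := o1.inter o2 hk1 hm1
  exact ⟨X, (e X).1 hX⟩

lemma FS.stepA [FiniteDimensional ℝ W] (h : FS B σ) {X : V} (hX : Gd B σ X)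
    (κ : V) (hκ : σ κ X = 0) (Y : V) : σ κ Y ∈ RU B σ X := by
  refine ⟨?_, ?_⟩
  · apply aux_moore (σ X) (σ Y) 0 _ κ _ 1
    · intro t
      simp [h.s X κ, hκ, h.s Y κ]
    · intro t
      have e : σ X + t • σ Y + t ^ 2 • (0 : V →ₗ[ℝ] W) = σ (X + t • Y) := by simp
      rw [e]
      exact hX.1 (X + t • Y)
  · rintro _ ⟨Z, rfl⟩
    rw [h.bs, h.s X Z, h.s Z X, h.sw, hκ]
    simp

lemma FS.stepB [FiniteDimensional ℝ V] [FiniteDimensional ℝ W] (h : FS B σ) {X : V}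
    (hX : Gd B σ X) (κ : V) (hκ : σ κ X = 0) (L : V) (hL : Hs B σ X X L = 0) : σ κ L = 0 := by
  refine h.nd2 _ (subset_span ⟨κ, L, rfl⟩) ?_
  intro Y
  have h1 : Hs B σ Y Y κ ∈ LinearMap.range (Hs B σ X X) := by
    apply aux_moore (Hs B σ X X) ((2:ℝ) • Hs B σ X Y) (Hs B σ Y Y) _ κ _ 2
    · intro t
      have e1 : Hs B σ X X κ = 0 := by
        ext Z
        rw [Hs_apply, h.sw, h.s X κ, hκ]; simp
      have e2 : Hs B σ X Y κ = 0 := by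
        ext Z
        rw [Hs_apply, h.sw, h.s X κ, hκ]; simp
      simp [e1, e2]
    · intro t
      rw [← h.Hs_line]
      exact hX.2 _
  obtain ⟨v, hv⟩ := h1
  have h2 : Hs B σ Y Y κ L = 0 := by
    rw [← hv]
    have : Hs B σ X X v L = Hs B σ X X L v := by
      simp only [Hs_apply]; rw [h.s v L]
    rw [this, hL]; simp
  rw [h.bs]
  exact h2

lemma FS.dims [FiniteDimensional ℝ V] [FiniteDimensional ℝ W] (h : FS B σ)
    (hB : B.Nondegenerate) (X : V) :
    finrank ℝ (LinearMap.range (σ X)) + finrank ℝ (RU B σ X) ≤ finrank ℝ W ∧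
    finrank ℝ (LinearMap.range (Hs B σ X X)) + finrank ℝ (RU B σ X) =
      finrank ℝ (LinearMap.range (σ X)) := by
  constructor
  · have h1 := LinearMap.BilinForm.finrank_orthogonal hB (LinearMap.range (σ X))
    have h2 : finrank ℝ (RU B σ X) ≤ finrank ℝ (B.orthogonal (LinearMap.range (σ X))) :=
      Submodule.finrank_mono inf_le_right
    have h3 := Submodule.finrank_le (LinearMap.range (σ X))
    omega
  · have e : LinearMap.ker (Hs B σ X X) = (RU B σ X).comap (σ X) := by
      ext Y
      rw [LinearMap.mem_ker, Submodule.mem_comap]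
      constructor
      · intro hY
        refine ⟨⟨Y, rfl⟩, ?_⟩
        rintro _ ⟨Z, rfl⟩
        have := LinearMap.congr_fun hY Z
        rw [Hs_apply, h.sw] at this
        rw [h.bs, this]; rfl
      · intro hY
        ext Z
        rw [Hs_apply, h.sw, h.bs]
        exact hY.2 _ ⟨Z, rfl⟩
    have h1 := LinearMap.finrank_range_add_finrank_ker (Hs B σ X X)
    have h2 := LinearMap.finrank_range_add_finrank_ker (σ X)
    let g : (RU B σ X).comap (σ X) →ₗ[ℝ] W := (σ X).domRestrict _
    have h3 := LinearMap.finrank_range_add_finrank_ker g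
    have h4 : LinearMap.range g = RU B σ X := by
      rw [LinearMap.range_domRestrict, Submodule.map_comap_eq, inf_eq_right]
      exact inf_le_left
    have h5 : finrank ℝ (LinearMap.ker g) = finrank ℝ (LinearMap.ker (σ X)) := by
      have : LinearMap.ker g = (LinearMap.ker (σ X)).comap (Submodule.subtype _) := by
        ext y; simp [g]
      rw [this]
      apply LinearEquiv.finrank_eq
      apply Submodule.comapSubtypeEquivOfLe
      intro y hy
      rw [LinearMap.mem_ker] at hy
      simp [hy]
    rw [h4, h5] at h3
    rw [e] at h1
    omega

lemma two_span {V : Type*} [AddCommGroup V] [Module ℝ V] [FiniteDimensional ℝ V]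
    {F : Type*} [AddCommGroup F] [Module ℝ F] [FiniteDimensional ℝ F] (M : V →ₗ[ℝ] F)
    (h : finrank ℝ (LinearMap.range M) ≤ 2) :
    ∃ e₁ e₂ : V, ∀ Y, ∃ L, ∃ a b : ℝ, M L = 0 ∧ Y = L + a • e₁ + b • e₂ := by
  obtain ⟨v, hv, hsp⟩ := aux_basis M
  have key : ∃ e₁ e₂ : V, ∀ i, v i = e₁ ∨ v i = e₂ := by
    generalize finrank ℝ (LinearMap.range M) = m at *
    interval_cases m
    · exact ⟨0, 0, fun i => i.elim0⟩
    · exact ⟨v 0, 0, fun i => by left; congr; exact Subsingleton.elim _ _⟩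
    · exact ⟨v 0, v 1, fun i => by fin_cases i <;> simp⟩
  obtain ⟨e₁, e₂, he⟩ := key
  refine ⟨e₁, e₂, fun Y => ?_⟩
  have h1 : M Y ∈ span ℝ {M e₁, M e₂} := by
    have : M Y ∈ span ℝ (Set.range fun i => M (v i)) := by rw [hsp]; exact ⟨Y, rfl⟩
    refine Submodule.span_mono ?_ this
    rintro _ ⟨i, rfl⟩
    rcases he i with h | h <;> simp [h]
  obtain ⟨a, b, hab⟩ := Submodule.mem_span_pair.1 h1
  refine ⟨Y - a • e₁ - b • e₂, a, b, ?_, ?_⟩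
  · simp [← hab]
  · module

lemma FS.stepC [FiniteDimensional ℝ V] [FiniteDimensional ℝ W] (h : FS B σ) {X : V}
    (hX : Gd B σ X) (hr : finrank ℝ (LinearMap.range (Hs B σ X X)) ≤ 2) :
    finrank ℝ (LinearMap.ker (σ X)) ≤ 4 := by
  obtain ⟨e₁, e₂, he⟩ := two_span _ hr
  let T : V → V → V → V →ₗ[ℝ] ℝ := fun a b c => (B.flip (σ b c)) ∘ₗ (σ a)
  have hT : ∀ a b c κ, T a b c κ = B (σ κ a) (σ b c) := by
    intro a b c κ
    simp [T, h.s a κ]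
  let g : V →ₗ[ℝ] (Fin 4 → ℝ) :=
    LinearMap.pi ![T e₁ e₁ e₁, T e₁ e₁ e₂, T e₁ e₂ e₂, T e₂ e₂ e₂]
  have hinj : Function.Injective (g.domRestrict (LinearMap.ker (σ X))) := by
    rw [injective_iff_map_eq_zero]
    rintro ⟨κ, hκ⟩ h0
    have hκ' : σ κ X = 0 := by rw [h.s]; exact hκ
    have h0' : g κ = 0 := h0
    have t1 : B (σ κ e₁) (σ e₁ e₁) = 0 := by rw [← hT]; exact congrFun h0' 0
    have t2 : B (σ κ e₁) (σ e₁ e₂) = 0 := by rw [← hT]; exact congrFun h0' 1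
    have t3 : B (σ κ e₁) (σ e₂ e₂) = 0 := by rw [← hT]; exact congrFun h0' 2
    have t4 : B (σ κ e₂) (σ e₂ e₂) = 0 := by rw [← hT]; exact congrFun h0' 3
    have t5 : B (σ κ e₂) (σ e₁ e₁) = 0 := by rw [h.sw, h.s e₂ e₁]; exact t2
    have t6 : B (σ κ e₂) (σ e₁ e₂) = 0 := by rw [h.sw]; exact t3
    have hk : ∀ Y, ∃ a b : ℝ, σ κ Y = a • σ κ e₁ + b • σ κ e₂ := by
      intro Y
      obtain ⟨L, a, b, hL, rfl⟩ := he Y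
      refine ⟨a, b, ?_⟩
      simp [h.stepB hX κ hκ' L hL]
    have hee : ∀ Z, B (σ κ Z) (σ e₁ e₁) = 0 ∧ B (σ κ Z) (σ e₁ e₂) = 0 ∧
        B (σ κ Z) (σ e₂ e₂) = 0 := by
      intro Z
      obtain ⟨a, b, hab⟩ := hk Z
      rw [hab]
      simp [t1, t2, t3, t4, t5, t6]
    have hez : ∀ Z Y, B (σ κ Z) (σ e₁ Y) = 0 ∧ B (σ κ Z) (σ e₂ Y) = 0 := by
      intro Z Y
      obtain ⟨a, b, hab⟩ := hk Z
      have r1 : B (σ κ e₁) (σ e₁ Y) = 0 := by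
        rw [h.s e₁ Y, h.sw]; exact (hee Y).1
      have r2 : B (σ κ e₂) (σ e₁ Y) = 0 := by
        rw [h.s e₁ Y, h.sw, h.s e₂ e₁]; exact (hee Y).2.1
      have r3 : B (σ κ e₁) (σ e₂ Y) = 0 := by
        rw [h.s e₂ Y, h.sw]; exact (hee Y).2.1
      have r4 : B (σ κ e₂) (σ e₂ Y) = 0 := by
        rw [h.s e₂ Y, h.sw]; exact (hee Y).2.2
      rw [hab]
      simp [r1, r2, r3, r4]
    have hzz : ∀ Z, σ κ Z = 0 := by
      intro Z
      apply h.nd1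
      intro Y U
      obtain ⟨a, b, hab⟩ := hk Z
      have r1 : B (σ κ e₁) (σ Y U) = 0 := by rw [h.sw]; exact (hez _ _).1
      have r2 : B (σ κ e₂) (σ Y U) = 0 := by rw [h.sw]; exact (hez _ _).2
      rw [hab]
      simp [r1, r2]
    have := h.nn κ hzz
    simpa using this
  have := LinearMap.finrank_le_finrank_of_injective hinj
  simpa using this

/-- pairing of the radical with `σ Y` -/
def GY (B : LinearMap.BilinForm ℝ W) (σ : V →ₗ[ℝ] V →ₗ[ℝ] W) (X Y : V) :
    RU B σ X →ₗ[ℝ] Dual ℝ V :=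
  (B.compl₂ (σ Y)).domRestrict (RU B σ X)

lemma GY_apply (X Y Z : V) (w : RU B σ X) : GY B σ X Y w Z = B w (σ Y Z) := rfl

lemma FS.stepD0 [FiniteDimensional ℝ V] [FiniteDimensional ℝ W] (h : FS B σ) {X : V}
    (hX : Gd B σ X) (hd : finrank ℝ (RU B σ X) < finrank ℝ (LinearMap.ker (σ X))) (Y : V) :
    ∃ κ, κ ≠ 0 ∧ σ κ X = 0 ∧ σ κ Y = 0 := by
  let f : LinearMap.ker (σ X) →ₗ[ℝ] RU B σ X :=
    LinearMap.codRestrict _ ((σ Y).domRestrict (LinearMap.ker (σ X))) (by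
      rintro ⟨κ, hκ⟩
      have hκ' : σ κ X = 0 := by rw [h.s]; exact hκ
      have := h.stepA hX κ hκ' Y
      rw [h.s] at this
      exact this)
  have hker := LinearMap.ker_ne_bot_of_finrank_lt (f := f) hd
  obtain ⟨⟨κ, hκ⟩, h1, h2⟩ := Submodule.exists_mem_ne_zero_of_ne_bot hker
  refine ⟨κ, ?_, ?_, ?_⟩
  · intro h0; apply h2; simp [h0]
  · rw [h.s]; exact hκ
  · rw [h.s]
    have := congrArg Subtype.val (LinearMap.mem_ker.1 h1)
    exact this

lemma FS.stepJ [FiniteDimensional ℝ W] (h : FS B σ) {X : V} (hX : Gd B σ X)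
    (Y κ : V) (h1 : σ κ X = 0) (h2 : σ κ Y = 0) (Z : V) :
    (⟨σ κ Z, h.stepA hX κ h1 Z⟩ : RU B σ X) ∈ LinearMap.ker (GY B σ X Y) := by
  rw [LinearMap.mem_ker]
  ext U
  rw [GY_apply]
  simp only
  rw [h.sw, h2]
  simp

lemma rank_two {E V : Type*} [AddCommGroup E] [Module ℝ E] [AddCommGroup V] [Module ℝ V]
    [FiniteDimensional ℝ V] (G : E →ₗ[ℝ] Dual ℝ V) (w w' : E) (Y0 Y1 : V)
    (e1 : G w Y0 ≠ 0) (e2 : G w' Y0 = 0) (e3 : G w' Y1 ≠ 0) :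
    2 ≤ finrank ℝ (LinearMap.range G) := by
  have hli : LinearIndependent ℝ ![G w, G w'] := by
    rw [Fintype.linearIndependent_iff]
    intro a hab
    have hab' : a 0 • G w + a 1 • G w' = 0 := by simpa [Fin.sum_univ_two] using hab
    have c1 := LinearMap.congr_fun hab' Y0
    have c2 := LinearMap.congr_fun hab' Y1
    simp [e2, e1] at c1
    simp [c1, e3] at c2
    intro i
    fin_cases i
    · exact c1
    · exact c2
  have h1 := finrank_span_eq_card hli
  have h2 : span ℝ (Set.range ![G w, G w']) ≤ LinearMap.range G := by
    rw [Submodule.span_le]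
    rintro _ ⟨i, rfl⟩
    fin_cases i
    · exact ⟨w, rfl⟩
    · exact ⟨w', rfl⟩
  have h3 := Submodule.finrank_mono h2
  simp only [Fintype.card_fin] at h1
  omega

lemma FS.stepD [FiniteDimensional ℝ V] [FiniteDimensional ℝ W] (h : FS B σ) {X : V}
    (hX : Gd B σ X) (hd : finrank ℝ (RU B σ X) < finrank ℝ (LinearMap.ker (σ X))) :
    ∃ Y, 2 ≤ finrank ℝ (LinearMap.range (GY B σ X Y)) := by
  have hJ : ∀ Y, ∃ w : RU B σ X, w ≠ 0 ∧ GY B σ X Y w = 0 := by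
    intro Y
    obtain ⟨κ, h0, h1, h2⟩ := h.stepD0 hX hd Y
    have : ∃ Z, σ κ Z ≠ 0 := by
      by_contra hcon
      push Not at hcon
      exact h0 (h.nn κ hcon)
    obtain ⟨Z, hZ⟩ := this
    refine ⟨_, ?_, h.stepJ hX Y κ h1 h2 Z⟩
    simpa [Subtype.ext_iff] using hZ
  have hq : ∀ w : RU B σ X, w ≠ 0 → ∃ Z, B w (σ Z Z) ≠ 0 := by
    intro w hw
    by_contra hcon
    push Not at hcon
    exact hw (Subtype.ext (h.nd2 w (RU_span X (w : W) w.2) hcon))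
  obtain ⟨w, hw, -⟩ := hJ 0
  obtain ⟨Y0, hY0⟩ := hq w hw
  obtain ⟨w', hw', hJ'⟩ := hJ Y0
  obtain ⟨Y1, hY1⟩ := hq w' hw'
  have hz : ∀ Z, B w' (σ Y0 Z) = 0 := fun Z => LinearMap.congr_fun hJ' Z
  obtain ⟨t, ht0, ht⟩ : ∃ t : ℝ, t ≠ 0 ∧ B w (σ Y0 Y0) + t * B w (σ Y1 Y0) ≠ 0 := by
    by_contra hcon
    push Not at hcon
    have a := hcon 1 one_ne_zero
    have b := hcon 2 two_ne_zero
    apply hY0; linarith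
  refine ⟨Y0 + t • Y1, ?_⟩
  have e1 : GY B σ X (Y0 + t • Y1) w Y0 ≠ 0 := by
    rw [GY_apply]; simpa using ht
  have e2 : GY B σ X (Y0 + t • Y1) w' Y0 = 0 := by
    rw [GY_apply]; simp [hz, h.s Y1 Y0]
  have e3 : GY B σ X (Y0 + t • Y1) w' Y1 ≠ 0 := by
    rw [GY_apply]; simp [hz, ht0, hY1]
  exact rank_two _ w w' Y0 Y1 e1 e2 e3

lemma FS.stepE [FiniteDimensional ℝ V] [FiniteDimensional ℝ W] (h : FS B σ) {X : V}
    (hX : Gd B σ X) (hd : finrank ℝ (RU B σ X) < finrank ℝ (LinearMap.ker (σ X)))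
    (hu : finrank ℝ (RU B σ X) ≤ 3) (Y : V) (hY : 2 ≤ finrank ℝ (LinearMap.range (GY B σ X Y))) :
    ∃ κ l w c, Cube B σ X Y κ l w c := by
  obtain ⟨κ, h0, h1, h2⟩ := h.stepD0 hX hd Y
  have : ∃ Z, σ κ Z ≠ 0 := by
    by_contra hcon
    push Not at hcon
    exact h0 (h.nn κ hcon)
  obtain ⟨Z0, hZ0⟩ := this
  have hk1 : finrank ℝ (LinearMap.ker (GY B σ X Y)) ≤ 1 := by
    have := LinearMap.finrank_range_add_finrank_ker (GY B σ X Y)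
    omega
  set w := σ κ Z0 with hw
  obtain ⟨f, hf⟩ : ∃ f : W →ₗ[ℝ] ℝ, f w = 1 := Module.Projective.exists_dual_eq_one ℝ hZ0
  have hprop : ∀ κ', σ κ' X = 0 → σ κ' Y = 0 → ∀ Z, σ κ' Z = f (σ κ' Z) • w := by
    intro κ' a1 a2 Z
    obtain ⟨v, hv⟩ := finrank_le_one_iff.1 hk1
    obtain ⟨c1, hc1⟩ := hv ⟨_, h.stepJ hX Y κ h1 h2 Z0⟩
    obtain ⟨c2, hc2⟩ := hv ⟨_, h.stepJ hX Y κ' a1 a2 Z⟩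
    have d1 : c1 • (v : W) = w := congrArg (fun x : LinearMap.ker (GY B σ X Y) => ((x : RU B σ X) : W)) hc1
    have d2 : c2 • (v : W) = σ κ' Z := congrArg (fun x : LinearMap.ker (GY B σ X Y) => ((x : RU B σ X) : W)) hc2
    have hc : c1 ≠ 0 := by
      rintro rfl
      apply hZ0; rw [← d1]; simp
    have d3 : σ κ' Z = (c2 / c1) • w := by
      rw [← d1, ← d2, smul_smul, div_mul_cancel₀ _ hc]
    rw [d3, map_smul, hf]; simp
  set l : V →ₗ[ℝ] ℝ := f ∘ₗ σ κ with hl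
  have hlZ0 : l Z0 = 1 := hf
  have hkz : ∀ Z, σ κ Z = l Z • w := hprop κ h1 h2
  have hsy : ∀ a b c, l a * B w (σ b c) = l b * B w (σ a c) := by
    intro a b c
    have := h.sw κ a b c
    rw [hkz a, hkz b] at this
    simpa using this
  have hq : ∀ Z Z', B w (σ Z Z') = B w (σ Z0 Z0) * (l Z * l Z') := by
    intro Z Z'
    have a1 := hsy Z0 Z Z'
    have a2 := hsy Z0 Z' Z0
    rw [hlZ0, one_mul] at a1 a2
    rw [a1, h.s Z0 Z', a2]; ring
  refine ⟨κ, l, w, B w (σ Z0 Z0), ?_⟩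
  have hc0 : B w (σ Z0 Z0) ≠ 0 := by
    intro hc
    apply hZ0
    apply h.nd1
    intro Z U
    rw [← hw, hq, hc, zero_mul]
  refine ⟨h0, ?_, hc0, ?_, h1, h2, ?_, ?_, hkz, hq, ?_⟩
  · intro hl0
    rw [hl0] at hlZ0
    simp at hlZ0
  · exact RU_iso X w w (h.stepA hX κ h1 Z0) (h.stepA hX κ h1 Z0)
  · simp [hl, h1]
  · simp [hl, h2]
  · intro κ' a1 a2
    refine ⟨f (σ κ' Z0), ?_⟩
    rw [← sub_eq_zero]
    apply h.nn
    intro Z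
    have b1 := h.sw κ' Z Z0 Z0
    rw [hprop κ' a1 a2 Z, hprop κ' a1 a2 Z0] at b1
    have b2 := hq Z Z0
    simp only [map_smul, LinearMap.smul_apply, smul_eq_mul] at b1
    rw [b2, hlZ0] at b1
    have b3 : f (σ κ' Z) = f (σ κ' Z0) * l Z := by
      apply mul_right_cancel₀ hc0
      rw [b1]; ring
    rw [map_sub, map_smul, LinearMap.sub_apply, LinearMap.smul_apply, hprop κ' a1 a2 Z, hkz Z,
      b3, smul_smul, sub_self]

lemma FS.cubes [FiniteDimensional ℝ V] [FiniteDimensional ℝ W] (h : FS B σ)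
    (hB : B.Nondegenerate) (h10 : finrank ℝ W ≤ 10) (hlt : finrank ℝ W < finrank ℝ V)
    {X : V} (hX : Gd B σ X) : ∃ Q : V → Prop, LOpen Q ∧ (∃ Y, Q Y) ∧
      ∀ Y, Q Y → ∃ κ l w c, Cube B σ X Y κ l w c := by
  obtain ⟨d1, d2⟩ := h.dims hB X
  have d3 := LinearMap.finrank_range_add_finrank_ker (σ X)
  have hd : finrank ℝ (RU B σ X) < finrank ℝ (LinearMap.ker (σ X)) := by omega
  have hu : finrank ℝ (RU B σ X) ≤ 3 := by
    by_contra hcon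
    have := h.stepC hX (by omega)
    omega
  refine ⟨fun Y => 2 ≤ finrank ℝ (LinearMap.range (GY B σ X Y)), ?_, h.stepD hX hd,
    fun Y hY => h.stepE hX hd hu Y hY⟩
  apply LOpen.rank (fun Y => GY B σ X Y)
  intro Y Z
  refine ⟨GY B σ X Z, 0, fun t => ?_⟩
  ext w U
  simp [GY_apply]

end

section
variable {V W : Type*} [AddCommGroup V] [Module ℝ V] [AddCommGroup W] [Module ℝ W]
    {B : LinearMap.BilinForm ℝ W} {σ : V →ₗ[ℝ] V →ₗ[ℝ] W}

lemma Cube.ne {X Y κ w c} {l : V →ₗ[ℝ] ℝ} (h : Cube B σ X Y κ l w c) {Z : V}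
    (hZ : ∀ κ', σ κ' X = 0 → σ κ' Y = 0 → σ κ' Z = 0 → κ' = 0) : l Z ≠ 0 := by
  intro h0
  apply h.k0
  apply hZ κ h.kX h.kY
  rw [h.kz, h0, zero_smul]

lemma Cube.triple (hF : FS B σ) {X Y κ w c} {l : V →ₗ[ℝ] ℝ} (h : Cube B σ X Y κ l w c) {Z : V}
    (hZ : l Z ≠ 0) : ∀ κ', σ κ' X = 0 → σ κ' Y = 0 → σ κ' Z = 0 → κ' = 0 := by
  intro κ' h1 h2 h3
  obtain ⟨a, rfl⟩ := h.un κ' h1 h2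
  rw [map_smul, LinearMap.smul_apply, h.kz, smul_smul] at h3
  rcases smul_eq_zero.1 h3 with h4 | h4
  · rcases mul_eq_zero.1 h4 with h5 | h5
    · rw [h5, zero_smul]
    · exact absurd h5 hZ
  · exfalso
    apply h.k0
    apply hF.nn
    intro Z
    rw [h.kz, h4, smul_zero]

lemma Cube.exists {X Y κ w c} {l : V →ₗ[ℝ] ℝ} (h : Cube B σ X Y κ l w c) : ∃ Z, l Z ≠ 0 := by
  by_contra hcon
  push Not at hcon
  exact h.l0 (LinearMap.ext hcon)

lemma Cube.orth {X Y κ w c} {l : V →ₗ[ℝ] ℝ} (h : Cube B σ X Y κ l w c)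
    {X' Y' κ' w' c'} {l' : V →ₗ[ℝ] ℝ} (h' : Cube B σ X' Y' κ' l' w' c') (Z : V)
    (h1 : l Z ≠ 0) (h2 : l' Z = 0) : B w' w = 0 := by
  have a := h'.q κ Z
  rw [h.kz, h2, map_smul, mul_zero, mul_zero, smul_eq_mul] at a
  exact (mul_eq_zero.1 a).resolve_left h1

lemma six [FiniteDimensional ℝ W] (hB : B.Nondegenerate) (h10 : finrank ℝ W ≤ 10)
    (w g : Fin 6 → W) (hw : ∀ i j, B (w i) (w j) = 0)
    (h0 : ∀ i j, i ≠ j → B (w i) (g j) = 0) (h1 : ∀ i, B (w i) (g i) ≠ 0) : False := by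
  have hli : LinearIndependent ℝ w := by
    rw [Fintype.linearIndependent_iff]
    intro a ha i
    have : B (∑ j, a j • w j) (g i) = 0 := by rw [ha]; simp
    rw [map_sum, LinearMap.sum_apply, Finset.sum_eq_single i] at this
    · simpa [h1 i] using this
    · intro j _ hj
      simp [h0 j i hj]
    · simp
  have e1 := finrank_span_eq_card hli
  have e2 := LinearMap.BilinForm.finrank_orthogonal hB (span ℝ (Set.range w))
  have e3 : span ℝ (Set.range w) ≤ B.orthogonal (span ℝ (Set.range w)) := by
    intro x hx y hy
    change B y x = 0
    induction hx using Submodule.span_induction with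
    | mem x hx =>
      obtain ⟨i, rfl⟩ := hx
      induction hy using Submodule.span_induction with
      | mem y hy => obtain ⟨j, rfl⟩ := hy; exact hw j i
      | zero => simp
      | add a b _ _ ha hb => simp [ha, hb]
      | smul c a _ ha => simp [ha]
    | zero => simp
    | add a b _ _ ha hb => simp [ha, hb]
    | smul c a _ ha => simp [ha]
  have e4 := Submodule.finrank_mono e3
  simp only [Fintype.card_fin] at e1
  omega

lemma FS.core [FiniteDimensional ℝ V] [FiniteDimensional ℝ W] (h : FS B σ)
    (hB : B.Nondegenerate) (h10 : finrank ℝ W ≤ 10) (hlt : finrank ℝ W < finrank ℝ V) :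
    False := by
  obtain ⟨og, X0, hX0⟩ := h.gd
  have C := fun {X : V} (hX : Gd B σ X) => h.cubes hB h10 hlt hX
  obtain ⟨Q0, o0, n0, c0⟩ := C hX0
  obtain ⟨X1, hX1, q01⟩ := og.inter o0 ⟨_, hX0⟩ n0
  obtain ⟨κ01, l01, w01, a01, C01⟩ := c0 _ q01
  obtain ⟨Q1, o1, n1, c1⟩ := C hX1
  -- third vector
  have i01 := o0.inter o1 n0 n1
  have p01 := o0.and o1
  have ig := og.inter p01 ⟨_, hX0⟩ i01
  have pg := og.and p01
  obtain ⟨X2, ⟨hX2, q02, q12⟩, l012⟩ := pg.inter (LOpen.fun l01) ig C01.exists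
  obtain ⟨κ02, l02, w02, a02, C02⟩ := c0 _ q02
  obtain ⟨κ12, l12, w12, a12, C12⟩ := c1 _ q12
  obtain ⟨Q2, o2, n2, c2⟩ := C hX2
  -- fourth vector
  have j1 := p01.inter o2 i01 n2
  have r1 := p01.and o2
  have j2 := r1.inter (LOpen.fun l01) j1 C01.exists
  have r2 := r1.and (LOpen.fun l01)
  have j3 := r2.inter (LOpen.fun l02) j2 C02.exists
  have r3 := r2.and (LOpen.fun l02)
  obtain ⟨X3, ⟨⟨⟨⟨q03, q13⟩, q23⟩, l013⟩, l023⟩, l123⟩ :=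
    r3.inter (LOpen.fun l12) j3 C12.exists
  obtain ⟨κ03, l03, w03, a03, C03⟩ := c0 _ q03
  obtain ⟨κ13, l13, w13, a13, C13⟩ := c1 _ q13
  obtain ⟨κ23, l23, w23, a23, C23⟩ := c2 _ q23
  have t012 := C01.triple h l012
  have t013 := C01.triple h l013
  have t023 := C02.triple h l023
  have t123 := C12.triple h l123
  have l021 : l02 X1 ≠ 0 := C02.ne fun k a b c => t012 k a c b
  have l031 : l03 X1 ≠ 0 := C03.ne fun k a b c => t013 k a c b
  have l032 : l03 X2 ≠ 0 := C03.ne fun k a b c => t023 k a c b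
  have l120 : l12 X0 ≠ 0 := C12.ne fun k a b c => t012 k c a b
  have l130 : l13 X0 ≠ 0 := C13.ne fun k a b c => t013 k c a b
  have l132 : l13 X2 ≠ 0 := C13.ne fun k a b c => t123 k a c b
  have l230 : l23 X0 ≠ 0 := C23.ne fun k a b c => t023 k c a b
  have l231 : l23 X1 ≠ 0 := C23.ne fun k a b c => t123 k c a b
  refine six hB h10 ![w01, w02, w03, w12, w13, w23]
    ![σ X2 X3, σ X1 X3, σ X1 X2, σ X0 X3, σ X0 X2, σ X0 X1] ?_ ?_ ?_
  · have z1 := C01.orth C02 X2 l012 C02.lY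
    have z2 := C01.orth C03 X3 l013 C03.lY
    have z3 := C01.orth C12 X2 l012 C12.lY
    have z4 := C01.orth C13 X3 l013 C13.lY
    have z5 := C01.orth C23 X2 l012 C23.lX
    have z6 := C02.orth C03 X3 l023 C03.lY
    have z7 := C02.orth C12 X1 l021 C12.lX
    have z8 := C02.orth C13 X1 l021 C13.lX
    have z9 := C02.orth C23 X3 l023 C23.lY
    have z10 := C03.orth C12 X1 l031 C12.lX
    have z11 := C03.orth C13 X1 l031 C13.lX
    have z12 := C03.orth C23 X2 l032 C23.lX
    have z13 := C12.orth C13 X3 l123 C13.lY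
    have z14 := C12.orth C23 X3 l123 C23.lY
    have z15 := C13.orth C23 X2 l132 C23.lX
    intro i j
    wlog hij : j ≤ i generalizing i j
    · rw [h.bs]; exact this j i (le_of_not_ge hij)
    fin_cases i <;> fin_cases j <;>
      first
      | exact absurd hij (by decide)
      | (simp [z1, z2, z3, z4, z5, z6, z7, z8, z9, z10, z11, z12, z13, z14, z15,
          C01.ww, C02.ww, C03.ww, C12.ww, C13.ww, C23.ww])
  · intro i j hij
    fin_cases i <;> fin_cases j <;>
      first
      | exact absurd rfl hij
      | (simp [C01.q, C02.q, C03.q, C12.q, C13.q, C23.q, C01.lX, C02.lX, C03.lX, C12.lX, C13.lX,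
          C23.lX, C01.lY, C02.lY, C03.lY, C12.lY, C13.lY, C23.lY])
  · intro i
    fin_cases i <;>
      simp [C01.q, C02.q, C03.q, C12.q, C13.q, C23.q, C01.c0, C02.c0, C03.c0, C12.c0, C13.c0,
        C23.c0, l012, l013, l021, l023, l031, l032, l120, l123, l130, l132, l230, l231]

end

/-- do Carmo–Dajczer basic lemma. Let `V₁`, `W` be finite-dimensional real
vector spaces with a nondegenerate symmetric bilinear form of type `(r, r)`, `r ≤ 5`, on `W`.
If `σ : V₁ × V₁ → W` is a nonzero flat symmetric bilinear map whose nullity space `N(σ)`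
satisfies `dim N(σ) < dim V₁ - 2r`, then `S(σ)` is a degenerate subspace of `W`. -/
theorem statement0 {V₁ W : Type*} [AddCommGroup V₁] [Module ℝ V₁] [FiniteDimensional ℝ V₁]
    [AddCommGroup W] [Module ℝ W] [FiniteDimensional ℝ W]
    (B : LinearMap.BilinForm ℝ W) (hBsymm : ∀ x y, B x y = B y x)
    (hBnd : B.Nondegenerate) (r : ℕ) (hr : r ≤ 5) (htype : BilinFormHasType B r r)
    (σ : V₁ →ₗ[ℝ] V₁ →ₗ[ℝ] W) (hσsymm : ∀ X Y, σ X Y = σ Y X) (hσne : σ ≠ 0)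
    (hflat : ∀ X Y Z U, B (σ X Y) (σ Z U) = B (σ X U) (σ Y Z))
    (hnull : finrank ℝ (⨅ X, LinearMap.ker (σ X) : Submodule ℝ V₁) + 2 * r < finrank ℝ V₁) :
    (span ℝ {w | ∃ X Y, σ X Y = w}) ⊓ B.orthogonal (span ℝ {w | ∃ X Y, σ X Y = w}) ≠ ⊥ := by
  by_contra hbot
  have hW : finrank ℝ W = 2 * r := by
    obtain ⟨b, -⟩ := htype
    rw [finrank_eq_card_basis b]
    simp; omega
  set N : Submodule ℝ V₁ := ⨅ X, LinearMap.ker (σ X) with hN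
  have hNmem : ∀ n, n ∈ N ↔ ∀ X, σ X n = 0 := by
    intro n; simp [hN, Submodule.mem_iInf]
  obtain ⟨C, hC⟩ := Submodule.exists_isCompl N
  have hdim := Submodule.finrank_add_eq_of_isCompl hC
  let τ : C →ₗ[ℝ] C →ₗ[ℝ] W := σ.compl₁₂ C.subtype C.subtype
  have hτ : ∀ x y : C, τ x y = σ x y := fun _ _ => rfl
  have hdec : ∀ X : V₁, ∃ c : C, ∀ Y, σ Y X = σ Y c := by
    intro X
    have hX : X ∈ N ⊔ C := by rw [hC.sup_eq_top]; trivial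
    obtain ⟨n, hn, c, hc, rfl⟩ := Submodule.mem_sup.1 hX
    refine ⟨⟨c, hc⟩, fun Y => ?_⟩
    simp [(hNmem n).1 hn Y]
  have hset : {w | ∃ X Y, τ X Y = w} = {w | ∃ X Y, σ X Y = w} := by
    ext w
    constructor
    · rintro ⟨X, Y, rfl⟩
      exact ⟨X, Y, rfl⟩
    · rintro ⟨X, Y, rfl⟩
      obtain ⟨c, hc⟩ := hdec X
      obtain ⟨c', hc'⟩ := hdec Y
      exact ⟨c, c', by rw [hτ, ← hc', hσsymm, ← hc, hσsymm]⟩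
  have hFS : FS B τ := by
    refine ⟨hBsymm, fun X Y => hσsymm _ _, fun X Y Z U => hflat _ _ _ _, ?_, ?_⟩
    · intro w hw h0
      rw [hset] at hw
      have : w ∈ (span ℝ {w | ∃ X Y, σ X Y = w}) ⊓
          B.orthogonal (span ℝ {w | ∃ X Y, σ X Y = w}) := by
        refine ⟨hw, ?_⟩
        intro y hy
        change B y w = 0
        rw [hBsymm]
        rw [← hset] at hy
        induction hy using Submodule.span_induction with
        | mem y hy => obtain ⟨X, Y, rfl⟩ := hy; exact h0 X Y
        | zero => simp
        | add a b _ _ ha hb => simp [ha, hb]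
        | smul c a _ ha => simp [ha]
      rw [hbot] at this
      simpa using this
    · intro n hn
      have h1 : (n : V₁) ∈ N := by
        rw [hNmem]
        intro X
        obtain ⟨c, hc⟩ := hdec X
        rw [hσsymm, hc]
        exact hn c
      have : (n : V₁) ∈ N ⊓ C := ⟨h1, n.2⟩
      rw [hC.inf_eq_bot] at this
      simpa using this
  exact hFS.core hBnd (by omega) (by omega)
end

section
/- Let V and W be finite-dimensional real vector spaces, W with a nondegenerate symmetric bilinear form, and let β : V × V → W be a flat symmetric bilinear map. Then the set RE*(β) of regular elements X of β with dim U(X) minimal is an open and dense subset of V. -/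
open Module Submodule

theorem aux_rank_s2 {V E F : Type*} [NormedAddCommGroup V] [NormedSpace ℝ V]
    [AddCommGroup E] [Module ℝ E] [AddCommGroup F] [Module ℝ F] [FiniteDimensional ℝ F]
    (A : V → E →ₗ[ℝ] F)
    (hA : ∀ (φ : F →ₗ[ℝ] ℝ) (e : E), AnalyticOnNhd ℝ (fun X => φ (A X e)) Set.univ) (X₀ : V) :
    ∃ f : V → ℝ, AnalyticOnNhd ℝ f Set.univ ∧ f X₀ ≠ 0 ∧
      ∀ X, f X ≠ 0 → finrank ℝ (LinearMap.range (A X₀)) ≤ finrank ℝ (LinearMap.range (A X)) := by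
  let R := LinearMap.range (A X₀)
  let b := Module.finBasis ℝ R
  have hb : ∀ j, ∃ e, A X₀ e = (b j : F) := fun j => (b j).2
  choose e he using hb
  obtain ⟨p, hp⟩ := LinearMap.exists_leftInverse_of_injective R.subtype R.ker_subtype
  let P : F →ₗ[ℝ] (Fin (finrank ℝ R) → ℝ) := b.equivFun.toLinearMap ∘ₗ p
  let M : V → Matrix (Fin (finrank ℝ R)) (Fin (finrank ℝ R)) ℝ :=
    fun X => Matrix.of fun j i => P (A X (e j)) i
  have hM0 : M X₀ = 1 := by
    ext j i
    have h1 : p (b j : F) = b j := LinearMap.congr_fun hp (b j)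
    simp only [M, P, Matrix.of_apply, he, LinearMap.comp_apply, h1]
    simp [Matrix.one_apply, Finsupp.single_apply]
  refine ⟨fun X => (M X).det, ?_, by simp [hM0], ?_⟩
  · simp only [Matrix.det_apply']
    refine Finset.analyticOnNhd_fun_sum _ fun σ _ => ?_
    refine analyticOnNhd_const.mul (Finset.analyticOnNhd_fun_prod _ fun i _ => ?_)
    exact hA (LinearMap.proj i ∘ₗ P) (e (σ i))
  · intro X hX
    have hli : LinearIndependent ℝ (fun j => A X (e j)) := by
      apply LinearIndependent.of_comp P
      exact Matrix.linearIndependent_rows_of_det_ne_zero hX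
    have hc := finrank_span_eq_card hli
    rw [Fintype.card_fin] at hc
    change finrank ℝ R ≤ _
    rw [← hc]
    apply Submodule.finrank_mono
    rw [Submodule.span_le]
    rintro _ ⟨j, rfl⟩
    exact ⟨_, rfl⟩

theorem aux_dense {V : Type*} [NormedAddCommGroup V] [NormedSpace ℝ V] (f : V → ℝ)
    (hf : AnalyticOnNhd ℝ f Set.univ) (X₀ : V) (h0 : f X₀ ≠ 0) : Dense {X | f X ≠ 0} := by
  rw [← compl_compl {X | f X ≠ 0}, ← interior_eq_empty_iff_dense_compl]
  by_contra hne
  obtain ⟨X, hX⟩ := Set.nonempty_iff_ne_empty.2 hne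
  have hev : f =ᶠ[nhds X] 0 := by
    filter_upwards [mem_interior_iff_mem_nhds.1 hX] with Y hY
    simpa using hY
  exact h0 (hf.eqOn_zero_of_preconnected_of_eventuallyEq_zero isPreconnected_univ
    (Set.mem_univ X) hev (Set.mem_univ X₀))

theorem aux_max {V E F : Type*} [NormedAddCommGroup V] [NormedSpace ℝ V]
    [AddCommGroup E] [Module ℝ E] [AddCommGroup F] [Module ℝ F] [FiniteDimensional ℝ F]
    (A : V → E →ₗ[ℝ] F)
    (hA : ∀ (φ : F →ₗ[ℝ] ℝ) (e : E), AnalyticOnNhd ℝ (fun X => φ (A X e)) Set.univ) :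
    IsOpen {X | ∀ Z, finrank ℝ (LinearMap.range (A Z)) ≤ finrank ℝ (LinearMap.range (A X))} ∧
    Dense {X | ∀ Z, finrank ℝ (LinearMap.range (A Z)) ≤ finrank ℝ (LinearMap.range (A X))} := by
  constructor
  · rw [isOpen_iff_mem_nhds]
    intro X hX
    obtain ⟨f, hf, h0, hr⟩ := aux_rank_s2 A hA X
    filter_upwards [(hf X (Set.mem_univ X)).continuousAt.eventually_ne h0] with Y hY Z
    exact (hX Z).trans (hr Y hY)
  · have hbdd : BddAbove (Set.range fun X => finrank ℝ (LinearMap.range (A X))) :=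
      ⟨finrank ℝ F, by rintro _ ⟨X, rfl⟩; exact Submodule.finrank_le _⟩
    obtain ⟨X₁, hX₁⟩ := Nat.sSup_mem (Set.range_nonempty _) hbdd
    have hmax : ∀ Z, finrank ℝ (LinearMap.range (A Z)) ≤ finrank ℝ (LinearMap.range (A X₁)) := by
      intro Z
      exact (le_csSup hbdd ⟨Z, rfl⟩).trans hX₁.ge
    obtain ⟨f, hf, h0, hr⟩ := aux_rank_s2 A hA X₁
    exact (aux_dense f hf X₁ h0).mono fun Y hY Z => (hmax Z).trans (hr Y hY)

theorem aux_lin {V : Type*} [NormedAddCommGroup V] [NormedSpace ℝ V] [FiniteDimensional ℝ V]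
    (l : V →ₗ[ℝ] ℝ) : AnalyticOnNhd ℝ (fun X => l X) Set.univ :=
  (LinearMap.toContinuousLinearMap l).analyticOnNhd _

theorem aux_quad {V : Type*} [NormedAddCommGroup V] [NormedSpace ℝ V] [FiniteDimensional ℝ V]
    (q : V →ₗ[ℝ] V →ₗ[ℝ] ℝ) : AnalyticOnNhd ℝ (fun X => q X X) Set.univ := by
  let b := Module.finBasis ℝ V
  have h : (fun X => q X X) = fun X => ∑ i, b.coord i X * q (b i) X := by
    funext X
    have h := congrArg (fun Y => q Y X) (b.sum_repr X)
    simp only [map_sum, map_smul, LinearMap.sum_apply, LinearMap.smul_apply, smul_eq_mul] at h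
    simp only [Basis.coord_apply]
    exact h.symm
  rw [h]
  exact Finset.analyticOnNhd_fun_sum _ fun i _ => (aux_lin _).mul (aux_lin _)

/-- Lemma 2.2, first part. For a flat symmetric bilinear map
`β : V × V → W` into a finite-dimensional space `W` with a nondegenerate symmetric bilinear
form, the set `RE*(β)` of regular elements `X` for which `dim U(X)` is minimal among regular
elements is open and dense in `V`. Here `X` is regular if `dim β(X,V)` is maximal, and
`U(X) = β(X,V) ∩ β(X,V)⊥`. -/
theorem statement2 {V W : Type*} [NormedAddCommGroup V] [NormedSpace ℝ V]
    [FiniteDimensional ℝ V] [AddCommGroup W] [Module ℝ W] [FiniteDimensional ℝ W]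
    (B : LinearMap.BilinForm ℝ W) (hBsymm : ∀ x y, B x y = B y x) (hBnd : B.Nondegenerate)
    (β : V →ₗ[ℝ] V →ₗ[ℝ] W) (hsymm : ∀ X Y, β X Y = β Y X)
    (hflat : ∀ X Y Z U, B (β X Y) (β Z U) = B (β X U) (β Y Z))
    (RE : Set V)
    (hRE : RE = {X | ∀ Z, finrank ℝ (LinearMap.range (β Z)) ≤ finrank ℝ (LinearMap.range (β X))})
    (U : V → Submodule ℝ W)
    (hU : ∀ X, U X = LinearMap.range (β X) ⊓ B.orthogonal (LinearMap.range (β X)))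
    (REstar : Set V)
    (hREstar : REstar = {X | X ∈ RE ∧ ∀ Y ∈ RE, finrank ℝ (U X) ≤ finrank ℝ (U Y)}) :
    IsOpen REstar ∧ Dense REstar := by

  let G : V → V →ₗ[ℝ] Dual ℝ V := fun X => B.compl₁₂ (β X) (β X)
  have h1 := aux_max (fun X => β X) (fun φ e => aux_lin (φ ∘ₗ β.flip e))
  have h2 := aux_max G (fun φ e => by
    obtain ⟨z, rfl⟩ := (Module.evalEquiv ℝ V).surjective φ
    exact aux_quad (B.compl₁₂ (β.flip e) (β.flip z)))
  have hdim : ∀ X, finrank ℝ (LinearMap.range (G X)) + finrank ℝ (U X)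
      = finrank ℝ (LinearMap.range (β X)) := by
    intro X
    let L : W →ₗ[ℝ] Dual ℝ V := B.compl₂ (β X)
    have hk : U X = LinearMap.range (β X) ⊓ LinearMap.ker L := by
      rw [hU]
      congr 1
      ext w
      simp only [LinearMap.BilinForm.mem_orthogonal_iff, LinearMap.mem_ker, LinearMap.ext_iff]
      constructor
      · intro h v
        exact (hBsymm _ _).trans (h _ ⟨v, rfl⟩)
      · rintro h _ ⟨v, rfl⟩
        exact (hBsymm _ _).trans (h v)
    have hr : LinearMap.range (G X) = LinearMap.range (L.domRestrict (LinearMap.range (β X))) := by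
      rw [LinearMap.range_domRestrict, ← LinearMap.range_comp]
      rfl
    have hkk : finrank ℝ (U X) = finrank ℝ (LinearMap.ker (L.domRestrict (LinearMap.range (β X)))) := by
      rw [hk, LinearMap.ker_domRestrict, ← Submodule.map_comap_subtype]
      exact (Submodule.equivMapOfInjective _ (Submodule.subtype_injective _) _).symm.finrank_eq
    rw [hr, hkk]
    exact LinearMap.finrank_range_add_finrank_ker _
  have hS : REstar = {X | ∀ Z, finrank ℝ (LinearMap.range (β Z)) ≤ finrank ℝ (LinearMap.range (β X))}
      ∩ {X | ∀ Z, finrank ℝ (LinearMap.range (G Z)) ≤ finrank ℝ (LinearMap.range (G X))} := by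
    obtain ⟨Y, hY1, hY2⟩ := (h1.2.inter_of_isOpen_left h2.2 h1.1).nonempty
    subst hREstar hRE
    ext X
    constructor
    · rintro ⟨hX, hX'⟩
      refine ⟨hX, fun Z => ?_⟩
      have a := hX' Y hY1
      have a1 := hY2 Z
      have a2 := hX Y
      have a3 := hY1 X
      have a4 := hdim X
      have a5 := hdim Y
      omega
    · rintro ⟨hX, hX'⟩
      refine ⟨hX, fun Z hZ => ?_⟩
      have a1 := hX' Z
      have a2 := hX Z
      have a3 := hZ X
      have a4 := hdim X
      have a5 := hdim Z
      omega
  rw [hS]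
  exact ⟨h1.1.inter h2.1, h1.2.inter_of_isOpen_left h2.2 h1.1⟩
end

section
/- Let V and W be finite-dimensional real vector spaces, W with a nondegenerate symmetric bilinear form, and let β : V × V → W be a flat symmetric bilinear map. Then for every regular element X ∈ RE(β), one has β(ker β(X), V) ⊆ U(X); that is, β(Z, Y) ∈ β(X,V) ∩ β(X,V)⊥ for every Z with β(X,Z) = 0 and every Y ∈ V. -/
open Module Submodule

/-- If `A` has maximal rank on the line `A + t C`, then `C` maps `ker A` into `range A`. -/
theorem range_of_max_rank {V W : Type*} [AddCommGroup V] [Module ℝ V]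
    [AddCommGroup W] [Module ℝ W] [FiniteDimensional ℝ W] (A C : V →ₗ[ℝ] W)
    (h : ∀ t : ℝ, finrank ℝ (LinearMap.range (A + t • C)) ≤ finrank ℝ (LinearMap.range A))
    (z : V) (hz : A z = 0) : C z ∈ LinearMap.range A := by
  by_contra hn
  let b := Module.finBasis ℝ (LinearMap.range A)
  choose v hv using fun i => (b i).2
  let e := (Module.finBasis ℝ W).equivFun
  let f : ℝ → Option (Fin (finrank ℝ (LinearMap.range A))) → (Fin (finrank ℝ W) → ℝ) :=
    fun t o => o.elim (e (C z)) (fun i => e (A (v i)) + t • e (C (v i)))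
  have hb : LinearIndependent ℝ (fun i => ((b i : LinearMap.range A) : W)) :=
    b.linearIndependent.map' (LinearMap.range A).subtype (Submodule.ker_subtype _)
  have h0 : LinearIndependent ℝ (f 0) := by
    have h1 : LinearIndependent ℝ
        (fun o => Option.casesOn' o (C z) (fun i => ((b i : LinearMap.range A) : W))) := by
      refine LinearIndependent.option hb ?_
      intro hmem
      apply hn
      refine (Submodule.span_le.2 ?_) hmem
      rintro _ ⟨i, rfl⟩
      exact (b i).2
    have h2 := h1.map' e.toLinearMap e.ker
    have h5 : f 0 = e.toLinearMap ∘
        (fun o => Option.casesOn' o (C z) (fun i => ((b i : LinearMap.range A) : W))) := by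
      funext o
      cases o <;> simp [f, hv]
    rw [h5]
    exact h2
  have hf : Continuous f := by
    refine continuous_pi fun o => ?_
    cases o
    · exact continuous_const
    · exact continuous_const.add (continuous_id.smul continuous_const)
  have hopen := (isOpen_setOfPred_linearIndependent (𝕜 := ℝ)).preimage hf
  obtain ⟨ε, hε, hball⟩ := Metric.isOpen_iff.1 hopen 0 h0
  have ht : LinearIndependent ℝ (f (ε / 2)) :=
    hball (by rw [Metric.mem_ball, Real.dist_eq, sub_zero, abs_of_pos (by positivity)]; linarith)
  have hle : Submodule.span ℝ (Set.range (f (ε / 2))) ≤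
      (LinearMap.range (A + (ε / 2) • C)).map e.toLinearMap := by
    rw [Submodule.span_le]
    rintro _ ⟨o, rfl⟩
    cases o with
    | none =>
      refine ⟨C z, ⟨(ε / 2)⁻¹ • z, ?_⟩, rfl⟩
      have : ε / 2 ≠ 0 := by positivity
      rw [map_smul, LinearMap.add_apply, hz, zero_add, LinearMap.smul_apply, smul_smul,
        inv_mul_cancel₀ this, one_smul]
    | some i => exact ⟨_, ⟨v i, rfl⟩, by simp [f]⟩
  have h3 := Submodule.finrank_mono hle
  rw [finrank_span_eq_card ht, LinearEquiv.finrank_map_eq e] at h3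
  have h4 := h (ε / 2)
  simp only [Fintype.card_option, Fintype.card_fin] at h3
  omega

/-- Lemma 2.2, second part. For a flat symmetric bilinear map
`β : V × V → W` into a finite-dimensional space `W` with a nondegenerate symmetric bilinear
form, and for every regular element `X` of `β` (i.e. `dim β(X,V)` maximal), one has
`β(ker β(X), V) ⊆ U(X) = β(X,V) ∩ β(X,V)⊥`: that is, `β(Z,Y) ∈ β(X,V) ∩ β(X,V)⊥` for every
`Z` with `β(X,Z) = 0` and every `Y ∈ V`. -/
theorem statement3 {V W : Type*} [AddCommGroup V] [Module ℝ V] [FiniteDimensional ℝ V]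
    [AddCommGroup W] [Module ℝ W] [FiniteDimensional ℝ W]
    (B : LinearMap.BilinForm ℝ W) (hBsymm : ∀ x y, B x y = B y x) (hBnd : B.Nondegenerate)
    (β : V →ₗ[ℝ] V →ₗ[ℝ] W) (hsymm : ∀ X Y, β X Y = β Y X)
    (hflat : ∀ X Y Z U, B (β X Y) (β Z U) = B (β X U) (β Y Z))
    (X : V)
    (hXreg : ∀ Z, finrank ℝ (LinearMap.range (β Z)) ≤ finrank ℝ (LinearMap.range (β X)))
    (Z : V) (hZ : β X Z = 0) (Y : V) :
    β Z Y ∈ LinearMap.range (β X) ⊓ B.orthogonal (LinearMap.range (β X)) := by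
  refine ⟨?_, ?_⟩
  · rw [hsymm Z Y]
    refine range_of_max_rank (β X) (β Y) (fun t => ?_) Z hZ
    have := hXreg (X + t • Y)
    rwa [map_add, map_smul] at this
  · refine LinearMap.BilinForm.mem_orthogonal_iff.2 ?_
    rintro _ ⟨U, rfl⟩
    have h := hflat X Z Y U
    rw [hZ, map_zero, LinearMap.zero_apply] at h
    exact h.symm
end

section
/- Let V and W be finite-dimensional real vector spaces, W with a nondegenerate symmetric bilinear form, and let β : V × V → W be a flat symmetric bilinear map such that β(X,X) ≠ 0 for every X ≠ 0 in V. If dim V > dim W, then there exists Z ≠ 0 in V with β(Z,Z) ∈ S(β) ∩ S(β)⊥; in particular, S(β) is a degenerate subspace of W. -/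
open Module Submodule

theorem rank_jump_aux {V E : Type*} [AddCommGroup V] [Module ℝ V] [FiniteDimensional ℝ V]
    [NormedAddCommGroup E] [NormedSpace ℝ E] [FiniteDimensional ℝ E]
    (f g : V →ₗ[ℝ] E) (z : V) (hz : f z = 0) (hg : g z ∉ LinearMap.range f) :
    ∃ t : ℝ, finrank ℝ (LinearMap.range f) < finrank ℝ (LinearMap.range (f + t • g)) := by
  let b := finBasis ℝ (LinearMap.range f)
  have hb : ∀ i, ∃ v, f v = (b i : E) := fun i => (b i).2
  choose v hv using hb
  have hli : LinearIndependent ℝ (fun i => (b i : E)) :=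
    b.linearIndependent.map' (LinearMap.range f).subtype (Submodule.ker_subtype _)
  let F : ℝ → Option (Fin (finrank ℝ (LinearMap.range f))) → E :=
    fun t o => o.elim (g z) (fun i => f (v i) + t • g (v i))
  have hF0 : LinearIndependent ℝ (F 0) := by
    rw [linearIndependent_option]
    refine ⟨?_, ?_⟩
    · simpa [F, Function.comp_def, hv] using hli
    · intro h
      apply hg
      refine (span_le.2 ?_) h
      rintro _ ⟨i, rfl⟩
      simp [F]
  have hcont : Continuous F := by
    refine continuous_pi fun o => ?_
    cases o with
    | none => exact continuous_const
    | some i => simp only [F, Option.elim]; fun_prop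
  have hev : ∀ᶠ t in nhds (0:ℝ), LinearIndependent ℝ (F t) :=
    (isOpen_setOfPred_linearIndependent.preimage hcont).mem_nhds hF0
  have hev2 : ∀ᶠ t in nhdsWithin (0:ℝ) {0}ᶜ, LinearIndependent ℝ (F t) ∧ t ≠ 0 :=
    (hev.filter_mono nhdsWithin_le_nhds).and self_mem_nhdsWithin
  obtain ⟨t, ht, ht0⟩ := hev2.exists
  refine ⟨t, ?_⟩
  have hmem : ∀ o, F t o ∈ LinearMap.range (f + t • g) := by
    intro o
    cases o with
    | none => exact ⟨t⁻¹ • z, by simp [F, hz, smul_smul, ht0]⟩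
    | some i => exact ⟨v i, by simp [F]⟩
  have hli2 : LinearIndependent ℝ
      (fun o => (⟨F t o, hmem o⟩ : LinearMap.range (f + t • g))) :=
    LinearIndependent.of_comp (LinearMap.range (f + t • g)).subtype ht
  have := hli2.fintype_card_le_finrank
  simpa [Nat.succ_le_iff] using this

theorem statement4 {V W : Type*} [AddCommGroup V] [Module ℝ V] [FiniteDimensional ℝ V]
    [AddCommGroup W] [Module ℝ W] [FiniteDimensional ℝ W]
    (B : LinearMap.BilinForm ℝ W) (hBsymm : ∀ x y, B x y = B y x) (hBnd : B.Nondegenerate)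
    (β : V →ₗ[ℝ] V →ₗ[ℝ] W) (hsymm : ∀ X Y, β X Y = β Y X)
    (hflat : ∀ X Y Z U, B (β X Y) (β Z U) = B (β X U) (β Y Z))
    (hne : ∀ X : V, X ≠ 0 → β X X ≠ 0)
    (hdim : finrank ℝ W < finrank ℝ V) :
    (∃ Z : V, Z ≠ 0 ∧ β Z Z ∈
        (span ℝ {w | ∃ X Y, β X Y = w}) ⊓ B.orthogonal (span ℝ {w | ∃ X Y, β X Y = w})) ∧
    (span ℝ {w | ∃ X Y, β X Y = w}) ⊓ B.orthogonal (span ℝ {w | ∃ X Y, β X Y = w}) ≠ ⊥ := by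
  have key : ∃ Z : V, Z ≠ 0 ∧ β Z Z ∈
      (span ℝ {w | ∃ X Y, β X Y = w}) ⊓ B.orthogonal (span ℝ {w | ∃ X Y, β X Y = w}) := by
    let e : W ≃ₗ[ℝ] (Fin (finrank ℝ W) → ℝ) := (finBasis ℝ W).equivFun
    let γ : V → V →ₗ[ℝ] (Fin (finrank ℝ W) → ℝ) := fun X => e.toLinearMap ∘ₗ β X
    -- a regular element
    obtain ⟨X, hX⟩ : ∃ X, ∀ Y, finrank ℝ (LinearMap.range (γ Y)) ≤
        finrank ℝ (LinearMap.range (γ X)) := by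
      have hfin : (Set.range fun Y => finrank ℝ (LinearMap.range (γ Y))).Finite := by
        refine (Set.finite_Iic (finrank ℝ (Fin (finrank ℝ W) → ℝ))).subset ?_
        rintro _ ⟨Y, rfl⟩
        exact Submodule.finrank_le _
      obtain ⟨m, ⟨X, rfl⟩, hm⟩ := hfin.exists_maximal ⟨_, ⟨0, rfl⟩⟩
      refine ⟨X, fun Y => ?_⟩
      rcases le_total (finrank ℝ (LinearMap.range (γ Y))) (finrank ℝ (LinearMap.range (γ X)))
        with h | h
      · exact h
      · exact hm ⟨Y, rfl⟩ h
    obtain ⟨Z, hZX, hZ0⟩ := (Submodule.ne_bot_iff _).1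
      (LinearMap.ker_ne_bot_of_finrank_lt (f := β X) hdim)
    rw [LinearMap.mem_ker] at hZX
    have hrange : ∀ Y, ∃ U, β X U = β Y Z := by
      intro Y
      by_contra hcon
      obtain ⟨t, ht⟩ := rank_jump_aux (γ X) (γ Y) Z (by simp [γ, hZX]) (by
        rintro ⟨U, hU⟩
        exact hcon ⟨U, e.injective hU⟩)
      have h1 : γ X + t • γ Y = γ (X + t • Y) := by
        ext1 U; simp [γ]
      rw [h1] at ht
      exact absurd (hX (X + t • Y)) (not_le.2 ht)
    have horth : ∀ Y U, B (β X U) (β Y Z) = 0 := by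
      intro Y U
      have h := hflat X Z Y U
      rw [hZX, hsymm Z Y] at h
      simpa using h.symm
    refine ⟨Z, hZ0, subset_span ⟨Z, Z, rfl⟩, ?_⟩
    rw [SetLike.mem_coe, LinearMap.BilinForm.mem_orthogonal_iff]
    intro w hw
    change B w (β Z Z) = 0
    induction hw using Submodule.span_induction with
    | mem w hw =>
      obtain ⟨P, Q, rfl⟩ := hw
      obtain ⟨U, hU⟩ := hrange P
      rw [hflat P Q Z Z, ← hU]
      exact horth Q U
    | zero => simp
    | add a b _ _ ha hb => simp [ha, hb]
    | smul c a _ ha => simp [ha]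
  refine ⟨key, ?_⟩
  obtain ⟨Z, hZ, hm⟩ := key
  intro h
  rw [h] at hm
  exact hne Z hZ ((Submodule.mem_bot ℝ).1 hm)
end

section
/- Let d ≤ 5 and n > 2d + 3 be integers. Let V be an n-dimensional real vector space and W a (2d+3)-dimensional real vector space with a nondegenerate symmetric bilinear form of type (d+1, d+2). Let β : V × V → W be a flat symmetric bilinear map with β(X,X) ≠ 0 for every X ≠ 0. Then ℓ := dim(S(β) ∩ S(β)⊥) ≥ 1, and there exist an orthogonal direct sum decomposition W = W₁ ⊕ W₂ in which the form is of type (ℓ, ℓ) on W₁ and of type (d−ℓ+1, d−ℓ+2) on W₂, together with symmetric bilinear maps ω₁ : V × V → W₁ and ω₂ : V × V → W₂ with β = ω₁ + ω₂, such that: (i) ω₁ is nonzero and null, i.e. ⟨ω₁(X,Y), ω₁(Z,U)⟩ = 0 for all X, Y, Z, U ∈ V; and (ii) ω₂ is flat with dim N(ω₂) ≥ n − dim W₂. -/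
open Module Submodule

def LPoly {E : Type*} [AddCommGroup E] [Module ℝ E] (p : E → ℝ) : Prop :=
  ∀ x y : E, ∃ q : Polynomial ℝ, ∀ t : ℝ, p (x + t • y) = q.eval t

section
variable {E : Type*} [AddCommGroup E] [Module ℝ E]

lemma LPoly.const (c : ℝ) : LPoly (fun _ : E => c) := fun _ _ => ⟨Polynomial.C c, by simp⟩

lemma LPoly.lin (f : E →ₗ[ℝ] ℝ) : LPoly (fun x => f x) := fun x y =>
  ⟨Polynomial.C (f x) + Polynomial.X * Polynomial.C (f y), fun t => by simp; ring⟩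

lemma LPoly.add {p q : E → ℝ} (hp : LPoly p) (hq : LPoly q) : LPoly (fun x => p x + q x) := by
  intro x y
  obtain ⟨a, ha⟩ := hp x y
  obtain ⟨b, hb⟩ := hq x y
  exact ⟨a + b, by simp [ha, hb]⟩

lemma LPoly.mul {p q : E → ℝ} (hp : LPoly p) (hq : LPoly q) : LPoly (fun x => p x * q x) := by
  intro x y
  obtain ⟨a, ha⟩ := hp x y
  obtain ⟨b, hb⟩ := hq x y
  exact ⟨a * b, by simp [ha, hb]⟩

lemma LPoly.sum {ι : Type*} (s : Finset ι) {p : ι → E → ℝ} (hp : ∀ i, LPoly (p i)) :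
    LPoly (fun x => ∑ i ∈ s, p i x) := by
  classical
  induction s using Finset.induction_on with
  | empty => simpa using LPoly.const (E := E) 0
  | insert a s ha ih => simpa [Finset.sum_insert ha] using (hp a).add ih

lemma LPoly.prod {ι : Type*} (s : Finset ι) {p : ι → E → ℝ} (hp : ∀ i, LPoly (p i)) :
    LPoly (fun x => ∏ i ∈ s, p i x) := by
  classical
  induction s using Finset.induction_on with
  | empty => simpa using LPoly.const (E := E) 1
  | insert a s ha ih => simpa [Finset.prod_insert ha] using (hp a).mul ih

lemma LPoly.det {k : ℕ} {M : E → Matrix (Fin k) (Fin k) ℝ} (h : ∀ i j, LPoly (fun x => M x i j)) :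
    LPoly (fun x => (M x).det) := by
  simp only [Matrix.det_apply']
  exact LPoly.sum _ fun σ => (LPoly.const _).mul (LPoly.prod _ fun i => h _ _)

lemma LPoly.mul_ne {p q : E → ℝ} (hp : LPoly p) (hq : LPoly q) {x y : E} (hx : p x ≠ 0)
    (hy : q y ≠ 0) : ∃ z, p z ≠ 0 ∧ q z ≠ 0 := by
  obtain ⟨a, ha⟩ := hp x (y - x)
  obtain ⟨b, hb⟩ := hq x (y - x)
  have ha0 : a ≠ 0 := by
    rintro rfl
    exact hx (by simpa using ha 0)
  have hb0 : b ≠ 0 := by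
    rintro rfl
    exact hy (by simpa using hb 1)
  by_contra! h
  apply mul_ne_zero ha0 hb0
  apply Polynomial.funext
  intro t
  simp only [Polynomial.eval_mul, Polynomial.eval_zero, ← ha, ← hb]
  by_cases h1 : p (x + t • (y - x)) = 0
  · simp [h1]
  · simp [h _ h1]

def Gnrc (P : E → Prop) : Prop := ∃ p : E → ℝ, LPoly p ∧ (∃ x, p x ≠ 0) ∧ ∀ x, p x ≠ 0 → P x

lemma Gnrc.and {P Q : E → Prop} (hP : Gnrc P) (hQ : Gnrc Q) : Gnrc (fun x => P x ∧ Q x) := by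
  obtain ⟨p, hp, ⟨x, hx⟩, h⟩ := hP
  obtain ⟨q, hq, ⟨y, hy⟩, h'⟩ := hQ
  obtain ⟨z, hz1, hz2⟩ := hp.mul_ne hq hx hy
  refine ⟨_, hp.mul hq, ⟨z, mul_ne_zero hz1 hz2⟩, fun x hx => ⟨h x ?_, h' x ?_⟩⟩
  · exact left_ne_zero_of_mul hx
  · exact right_ne_zero_of_mul hx

lemma Gnrc.ex {P : E → Prop} (hP : Gnrc P) : ∃ x, P x := by
  obtain ⟨p, hp, ⟨x, hx⟩, h⟩ := hP
  exact ⟨x, h x hx⟩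
end

lemma exists_dual_fam {F : Type*} [AddCommGroup F] [Module ℝ F] {k : ℕ} (w : Fin k → F)
    (hw : LinearIndependent ℝ w) :
    ∃ φ : Fin k → (F →ₗ[ℝ] ℝ), ∀ a b, φ a (w b) = if a = b then 1 else 0 := by
  have hs : LinearIndepOn ℝ id (Set.range w) := hw.linearIndepOn_id
  obtain ⟨g, hg⟩ := (Basis.span hw).constr ℝ (M' := Fin k → ℝ) (fun i => Pi.single i 1) |>.exists_extend
  refine ⟨fun a => (LinearMap.proj a) ∘ₗ g, fun a b => ?_⟩
  have : g (w b) = Pi.single b 1 := by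
    have h1 := LinearMap.congr_fun hg (Basis.span hw b)
    rw [Basis.constr_basis] at h1
    simpa [Basis.span_apply] using h1
  simp [this, Pi.single_apply]

lemma linInd_of_det {F : Type*} [AddCommGroup F] [Module ℝ F] {k : ℕ} (w : Fin k → F)
    (φ : Fin k → (F →ₗ[ℝ] ℝ)) (h : (Matrix.of fun a b => φ a (w b)).det ≠ 0) :
    LinearIndependent ℝ w := by
  rw [Fintype.linearIndependent_iff]
  intro g hg
  have : (Matrix.of fun a b => φ a (w b)).mulVec g = 0 := by
    ext a
    have := congrArg (φ a) hg
    simpa [Matrix.mulVec, dotProduct, mul_comm] using this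
  have := Matrix.eq_zero_of_mulVec_eq_zero h this
  intro i
  simp [this]

section
variable {E V F : Type*} [AddCommGroup E] [Module ℝ E] [AddCommGroup V] [Module ℝ V]
  [FiniteDimensional ℝ V] [AddCommGroup F] [Module ℝ F]

lemma exists_lift_basis (L : V →ₗ[ℝ] F) :
    ∃ v : Fin (finrank ℝ (LinearMap.range L)) → V, LinearIndependent ℝ (fun i => L (v i)) ∧
      span ℝ (Set.range fun i => L (v i)) = LinearMap.range L := by
  let b := finBasis ℝ (LinearMap.range L)
  choose v hv using fun i => (b i).2
  refine ⟨v, ?_, ?_⟩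
  · simp only [hv]
    exact b.linearIndependent.map' (LinearMap.range L).subtype (by simp)
  · simp only [hv]
    have := congrArg (Submodule.map (LinearMap.range L).subtype) b.span_eq
    rw [Submodule.map_span, ← Set.range_comp] at this
    simpa [Function.comp_def] using this

lemma le_rank_of_linInd {k : ℕ} (L : V →ₗ[ℝ] F) (w : Fin k → F) (hw : LinearIndependent ℝ w)
    (h : ∀ i, w i ∈ LinearMap.range L) : k ≤ finrank ℝ (LinearMap.range L) := by
  have h1 : LinearIndependent ℝ (fun i => (⟨w i, h i⟩ : LinearMap.range L)) :=
    LinearIndependent.of_comp (LinearMap.range L).subtype hw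
  simpa using h1.fintype_card_le_finrank

lemma gnrc_rank (M : E → (V →ₗ[ℝ] F))
    (hM : ∀ (v : V) (φ : F →ₗ[ℝ] ℝ), LPoly (fun x => φ (M x v))) :
    Gnrc (fun x => ∀ y, finrank ℝ (LinearMap.range (M y)) ≤ finrank ℝ (LinearMap.range (M x))) := by
  obtain ⟨x₀, hx₀⟩ : ∃ x₀, ∀ y,
      finrank ℝ (LinearMap.range (M y)) ≤ finrank ℝ (LinearMap.range (M x₀)) := by
    have hb : BddAbove (Set.range fun y => finrank ℝ (LinearMap.range (M y))) :=
      ⟨finrank ℝ V, by rintro _ ⟨y, rfl⟩; exact LinearMap.finrank_range_le _⟩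
    obtain ⟨x₀, hx⟩ := Nat.sSup_mem (Set.range_nonempty _) hb
    exact ⟨x₀, fun y => by simp only at hx; rw [hx]; exact le_csSup hb ⟨y, rfl⟩⟩
  obtain ⟨v, hv, -⟩ := exists_lift_basis (M x₀)
  obtain ⟨φ, hφ⟩ := exists_dual_fam _ hv
  refine ⟨fun x => (Matrix.of fun a b => φ a (M x (v b))).det, LPoly.det fun i j => hM _ _, 
    ⟨x₀, ?_⟩, fun x hx y => (hx₀ y).trans ?_⟩
  · have : (Matrix.of fun a b => φ a (M x₀ (v b))) = 1 := by
      ext a b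
      simp [hφ, Matrix.one_apply]
    simp [this]
  · exact le_rank_of_linInd (M x) _ (linInd_of_det _ φ hx) fun i => ⟨_, rfl⟩

lemma moore (L0 L1 : V →ₗ[ℝ] F)
    (h : ∀ t : ℝ, finrank ℝ (LinearMap.range (L0 + t • L1)) ≤ finrank ℝ (LinearMap.range L0))
    (n : V) (hn : L0 n = 0) : L1 n ∈ LinearMap.range L0 := by
  by_contra hc
  obtain ⟨v, hv, hs⟩ := exists_lift_basis L0
  have hli : LinearIndependent ℝ (Fin.cons (L1 n) (fun i => L0 (v i)) : Fin (_ + 1) → F) := by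
    rw [linearIndependent_finCons]
    exact ⟨hv, by rwa [hs]⟩
  obtain ⟨φ, hφ⟩ := exists_dual_fam _ hli
  let w : ℝ → Fin (finrank ℝ (LinearMap.range L0) + 1) → F := fun t =>
    Fin.cons (L1 n) (fun i => L0 (v i) + t • L1 (v i))
  have hp : LPoly (fun t : ℝ => (Matrix.of fun a b => φ a (w t b)).det) := by
    apply LPoly.det
    intro i j
    refine Fin.cases ?_ (fun j => ?_) j
    · simpa [w] using LPoly.const _
    · simp only [w, Matrix.of_apply, Fin.cons_succ, map_add, map_smul, smul_eq_mul]
      exact (LPoly.const _).add ((LPoly.lin LinearMap.id).mul (LPoly.const _))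
  obtain ⟨t, ht, ht'⟩ := hp.mul_ne (LPoly.lin (LinearMap.id : ℝ →ₗ[ℝ] ℝ)) (x := 0) (y := 1) (by
    have : (Matrix.of fun a b => φ a (w 0 b)) = 1 := by
      ext a b
      simp only [w, zero_smul, add_zero, Matrix.of_apply, hφ, Matrix.one_apply]
    simp [this]) (by simp)
  have := le_rank_of_linInd (L0 + t • L1) _ (linInd_of_det _ φ ht) (by
    intro i
    refine Fin.cases ?_ (fun j => ?_) i
    · refine ⟨t⁻¹ • n, ?_⟩
      simp only [LinearMap.id_apply] at ht'
      simp [w, hn, ht', smul_smul]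
    · exact ⟨v j, by simp [w]⟩)
  have := h t
  omega
end

section
variable {V W : Type*} [AddCommGroup V] [Module ℝ V] [FiniteDimensional ℝ V]
    [AddCommGroup W] [Module ℝ W] [FiniteDimensional ℝ W]

/-- The cubic functional. -/
def cubf (B : LinearMap.BilinForm ℝ W) (β : V →ₗ[ℝ] V →ₗ[ℝ] W) (T : V) : V →ₗ[ℝ] ℝ :=
  (B (β T T)) ∘ₗ (β T)

lemma flat_polar (B : LinearMap.BilinForm ℝ W) (hB : ∀ x y, B x y = B y x)
    (β : V →ₗ[ℝ] V →ₗ[ℝ] W) (hs : ∀ X Y, β X Y = β Y X)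
    (hf : ∀ X Y Z U, B (β X Y) (β Z U) = B (β X U) (β Y Z)) (n : V)
    (h : ∀ T, B (β T T) (β T n) = 0) (A C D : V) : B (β n A) (β C D) = 0 := by
  have e1 : ∀ A C D, B (β A C) (β D n) = B (β C A) (β D n) := fun A C D => by rw [hs A C]
  have e2 : ∀ A C D, B (β A C) (β D n) = B (β A D) (β C n) := fun A C D => by
    rw [hs D n, hf A C n D, hs C n]
  have a1 := h (A + C + D)
  have a2 := h (A + C)
  have a3 := h (A + D)
  have a4 := h (C + D)
  have a5 := h A
  have a6 := h C
  have a7 := h D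
  simp only [map_add, LinearMap.add_apply] at a1 a2 a3 a4
  have g1 := e1 A C D
  have g2 := e1 A D C
  have g3 := e1 C D A
  have g4 := e2 A C D
  have g5 := e2 C A D
  have g6 := e2 D A C
  have : B (β A C) (β D n) = 0 := by linarith
  rw [hs n A, hf A n C D, hs n C, ← e2 A C D] 
  exact this

lemma ker_dim (B : LinearMap.BilinForm ℝ W) (hB : ∀ x y, B x y = B y x) (hnd : B.Nondegenerate)
    (β : V →ₗ[ℝ] V →ₗ[ℝ] W) (hs : ∀ X Y, β X Y = β Y X)
    (hf : ∀ X Y Z U, B (β X Y) (β Z U) = B (β X U) (β Y Z)) (X Y : V) :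
    finrank ℝ V ≤ finrank ℝ (LinearMap.ker (β X) ⊓ LinearMap.ker (β Y) : Submodule ℝ V) +
      finrank ℝ W := by
  have h1 := LinearMap.finrank_range_add_finrank_ker (β X)
  have h2 := LinearMap.finrank_range_add_finrank_ker ((β Y).domRestrict (LinearMap.ker (β X)))
  have hr : B.IsRefl := fun x y h => by rw [hB]; exact h
  have h3 := LinearMap.BilinForm.finrank_add_finrank_orthogonal hr (LinearMap.range (β X))
  have h4 : finrank ℝ (LinearMap.range ((β Y).domRestrict (LinearMap.ker (β X)))) ≤
      finrank ℝ (B.orthogonal (LinearMap.range (β X))) := by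
    apply Submodule.finrank_mono
    rintro _ ⟨⟨n, hn⟩, rfl⟩
    rw [LinearMap.BilinForm.mem_orthogonal_iff]
    rintro _ ⟨A, rfl⟩
    simp only [LinearMap.mem_ker] at hn
    simp only [LinearMap.domRestrict_apply]
    rw [hf X A Y n, hn]
    simp
  have h5 : finrank ℝ (LinearMap.ker ((β Y).domRestrict (LinearMap.ker (β X)))) =
      finrank ℝ (LinearMap.ker (β X) ⊓ LinearMap.ker (β Y) : Submodule ℝ V) := by
    rw [← Submodule.finrank_map_subtype_eq]
    have e : ∀ {P Q : Submodule ℝ V}, P = Q → finrank ℝ P = finrank ℝ Q := by rintro P _ rfl; rfl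
    apply e
    ext x
    simp [and_comm]
  have h6 : LinearMap.range (β X) ⊓ B.orthogonal ⊤ = ⊥ := by
    rw [LinearMap.BilinForm.orthogonal_top_eq_bot hnd]
    simp
  rw [h6, finrank_bot] at h3
  omega

lemma pair_rank (L0 L1 : V →ₗ[ℝ] W) :
    finrank ℝ (LinearMap.range (L0.prod L1)) = finrank ℝ (LinearMap.range L0) +
      finrank ℝ (LinearMap.range (L1.domRestrict (LinearMap.ker L0))) := by
  have h0 := LinearMap.finrank_range_add_finrank_ker (L0.prod L1)
  have h1 := LinearMap.finrank_range_add_finrank_ker L0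
  have h2 := LinearMap.finrank_range_add_finrank_ker (L1.domRestrict (LinearMap.ker L0))
  have h5 : finrank ℝ (LinearMap.ker (L1.domRestrict (LinearMap.ker L0))) =
      finrank ℝ (LinearMap.ker (L0.prod L1)) := by
    rw [← Submodule.finrank_map_subtype_eq, LinearMap.ker_prod]
    have e : ∀ {P Q : Submodule ℝ V}, P = Q → finrank ℝ P = finrank ℝ Q := by rintro P _ rfl; rfl
    apply e
    ext x
    simp [and_comm]
  omega

lemma local_triple (B : LinearMap.BilinForm ℝ W) (hB : ∀ x y, B x y = B y x)
    (hnd : B.Nondegenerate)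
    (β : V →ₗ[ℝ] V →ₗ[ℝ] W) (hs : ∀ X Y, β X Y = β Y X)
    (hf : ∀ X Y Z U, B (β X Y) (β Z U) = B (β X U) (β Y Z))
    (hS : ∀ n A, (∀ C D, B (β n A) (β C D) = 0) → β n A = 0)
    (hlt : finrank ℝ (⨅ X, LinearMap.ker (β X) : Submodule ℝ V) + finrank ℝ W < finrank ℝ V)
    (X Y Z : V)
    (R2 : ∀ P Q, finrank ℝ (LinearMap.range ((β P).prod (β Q))) ≤
      finrank ℝ (LinearMap.range ((β X).prod (β Y))))
    (R3 : ∀ T, finrank ℝ (LinearMap.range (((β X).prod (β Y)).prod (cubf B β T))) ≤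
      finrank ℝ (LinearMap.range (((β X).prod (β Y)).prod (cubf B β Z)))) :
    ∃ n m, β X n = 0 ∧ β Y n = 0 ∧ β X m = 0 ∧ B (β Z Z) (β Z n) ≠ 0 ∧
      B (β Z Y) (β Z m) ≠ 0 := by
  have hd := ker_dim B hB hnd β hs hf X Y
  obtain ⟨n₀, hn₀, hn₀'⟩ : ∃ n₀ ∈ (LinearMap.ker (β X) ⊓ LinearMap.ker (β Y) : Submodule ℝ V),
      n₀ ∉ (⨅ X, LinearMap.ker (β X) : Submodule ℝ V) := by
    by_contra! hc
    have := Submodule.finrank_mono (show (LinearMap.ker (β X) ⊓ LinearMap.ker (β Y) : Submodule ℝ V)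
      ≤ ⨅ X, LinearMap.ker (β X) from hc)
    omega
  obtain ⟨T, hT⟩ : ∃ T, cubf B β T n₀ ≠ 0 := by
    by_contra! hc
    apply hn₀'
    rw [Submodule.mem_iInf]
    intro A
    rw [LinearMap.mem_ker, hs]
    exact hS _ _ fun C D => flat_polar B hB β hs hf n₀ hc A C D
  obtain ⟨n, hn, hnZ⟩ : ∃ n ∈ LinearMap.ker ((β X).prod (β Y)), cubf B β Z n ≠ 0 := by
    by_contra! hc
    have hk : LinearMap.ker (((β X).prod (β Y)).prod (cubf B β Z)) =
        LinearMap.ker ((β X).prod (β Y)) := by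
      rw [LinearMap.ker_prod]
      exact inf_eq_left.2 hc
    have hk' : LinearMap.ker (((β X).prod (β Y)).prod (cubf B β T)) <
        LinearMap.ker ((β X).prod (β Y)) := by
      rw [LinearMap.ker_prod]
      refine lt_of_le_of_ne inf_le_left fun he => hT ?_
      have : n₀ ∈ LinearMap.ker ((β X).prod (β Y)) := by rwa [LinearMap.ker_prod]
      rw [← he] at this
      exact this.2
    have h1 := Submodule.finrank_lt_finrank_of_lt hk'
    rw [← hk] at h1
    have h2 := LinearMap.finrank_range_add_finrank_ker (((β X).prod (β Y)).prod (cubf B β T))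
    have h3 := LinearMap.finrank_range_add_finrank_ker (((β X).prod (β Y)).prod (cubf B β Z))
    have := R3 T
    omega
  rw [LinearMap.ker_prod] at hn
  have hX : β X n = 0 := hn.1
  have hY : β Y n = 0 := hn.2
  obtain ⟨⟨m, hm⟩, hm'⟩ := moore ((β Y).domRestrict (LinearMap.ker (β X)))
    ((β Z).domRestrict (LinearMap.ker (β X))) (by
      intro t
      have := R2 X (Y + t • Z)
      rw [pair_rank, pair_rank] at this
      have e : (β (Y + t • Z)).domRestrict (LinearMap.ker (β X)) =
        ((β Y).domRestrict (LinearMap.ker (β X))) +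
          t • ((β Z).domRestrict (LinearMap.ker (β X))) := by
        ext x
        simp
      rw [e] at this
      omega) ⟨n, hX⟩ (by simpa using hY)
  simp only [LinearMap.domRestrict_apply] at hm'
  refine ⟨n, m, hX, hY, hm, hnZ, ?_⟩
  rw [hs Z m, hf Z Y m Z, hs Y m, hs m Y, hm']
  exact hnZ

lemma LPoly.cub (B : LinearMap.BilinForm ℝ W) (β : V →ₗ[ℝ] V →ₗ[ℝ] W) {E : Type*}
    [AddCommGroup E] [Module ℝ E] (f : E →ₗ[ℝ] V) (v : V) :
    LPoly (fun x => cubf B β (f x) v) := by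
  intro x y
  refine ⟨Polynomial.C (B (β (f x) (f x)) (β (f x) v)) +
    Polynomial.X * Polynomial.C (B (β (f x) (f y)) (β (f x) v) + B (β (f y) (f x)) (β (f x) v) +
      B (β (f x) (f x)) (β (f y) v)) +
    Polynomial.X ^ 2 * Polynomial.C (B (β (f x) (f y)) (β (f y) v) +
      B (β (f y) (f x)) (β (f y) v) + B (β (f y) (f y)) (β (f x) v)) +
    Polynomial.X ^ 3 * Polynomial.C (B (β (f y) (f y)) (β (f y) v)), fun t => ?_⟩
  simp [cubf]
  ring

theorem main_lemma (B : LinearMap.BilinForm ℝ W) (hB : ∀ x y, B x y = B y x)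
    (hnd : B.Nondegenerate)
    (β : V →ₗ[ℝ] V →ₗ[ℝ] W) (hs : ∀ X Y, β X Y = β Y X)
    (hf : ∀ X Y Z U, B (β X Y) (β Z U) = B (β X U) (β Y Z))
    (hS : ∀ n A, (∀ C D, B (β n A) (β C D) = 0) → β n A = 0)
    (hiso : ∀ e : Fin 6 → W, LinearIndependent ℝ e → (∀ i j, B (e i) (e j) = 0) → False) :
    finrank ℝ V ≤ finrank ℝ (⨅ X, LinearMap.ker (β X) : Submodule ℝ V) + finrank ℝ W := by
  by_contra! hlt
  have l1 : ∀ (i : Fin 3) (v : V) (φ : W →ₗ[ℝ] ℝ), LPoly (fun x : Fin 3 → V => φ (β (x i) v)) :=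
    fun i v φ => LPoly.lin (φ ∘ₗ (β.flip v) ∘ₗ (LinearMap.proj i : (Fin 3 → V) →ₗ[ℝ] V))
  have G1 : ∀ i : Fin 3, Gnrc (fun x : Fin 3 → V => ∀ y : Fin 3 → V,
      finrank ℝ (LinearMap.range (β (y i))) ≤ finrank ℝ (LinearMap.range (β (x i)))) :=
    fun i => gnrc_rank (fun x : Fin 3 → V => β (x i)) (l1 i)
  have l2 : ∀ (i j : Fin 3) (v : V) (φ : W × W →ₗ[ℝ] ℝ),
      LPoly (fun x : Fin 3 → V => φ (((β (x i)).prod (β (x j))) v)) := by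
    intro i j v φ
    have := (l1 i v (φ ∘ₗ LinearMap.inl ℝ W W)).add (l1 j v (φ ∘ₗ LinearMap.inr ℝ W W))
    convert this using 2 with x
    simp [← map_add]
  have G2 : ∀ i j : Fin 3, Gnrc (fun x : Fin 3 → V => ∀ y : Fin 3 → V,
      finrank ℝ (LinearMap.range ((β (y i)).prod (β (y j)))) ≤
        finrank ℝ (LinearMap.range ((β (x i)).prod (β (x j))))) :=
    fun i j => gnrc_rank (fun x : Fin 3 → V => (β (x i)).prod (β (x j))) (l2 i j)
  have G3 : ∀ i j k : Fin 3, Gnrc (fun x : Fin 3 → V => ∀ y : Fin 3 → V,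
      finrank ℝ (LinearMap.range (((β (y i)).prod (β (y j))).prod (cubf B β (y k)))) ≤
        finrank ℝ (LinearMap.range (((β (x i)).prod (β (x j))).prod (cubf B β (x k))))) := by
    intro i j k
    refine gnrc_rank (fun x : Fin 3 → V => ((β (x i)).prod (β (x j))).prod (cubf B β (x k))) ?_
    intro v φ
    have := (l2 i j v (φ ∘ₗ LinearMap.inl ℝ (W × W) ℝ)).add
      ((LPoly.cub B β (LinearMap.proj k : (Fin 3 → V) →ₗ[ℝ] V) v).mul
        (LPoly.const (φ (LinearMap.inr ℝ (W × W) ℝ 1))))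
    convert this using 2 with x
    rw [← smul_eq_mul, ← map_smul]
    simp only [LinearMap.comp_apply, ← map_add]
    simp
  obtain ⟨x, ⟨⟨⟨r0, r1⟩, r2⟩, ⟨p0, p1⟩, p2⟩, ⟨q0, q1⟩, q2⟩ :=
    (((((G1 0).and (G1 1)).and (G1 2)).and (((G2 2 1).and (G2 0 2)).and (G2 1 0))).and
      (((G3 2 1 0).and (G3 0 2 1)).and (G3 1 0 2))).ex
  -- isotropy
  have iso : ∀ X : V, (∀ Y, finrank ℝ (LinearMap.range (β Y)) ≤ finrank ℝ (LinearMap.range (β X))) →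
      ∀ A C n m, β X n = 0 → β X m = 0 → B (β A n) (β C m) = 0 := by
    intro X hX A C n m hn hm
    obtain ⟨D, hD⟩ := moore (β X) (β C) (by
      intro t
      have := hX (X + t • C)
      rw [map_add, map_smul] at this
      exact this) m hm
    rw [← hD, hs A n, hs X D, hf n A D X, hs n X, hn]
    simp
  have i0 := iso (x 0) fun Y => r0 fun _ => Y
  have i1 := iso (x 1) fun Y => r1 fun _ => Y
  have i2 := iso (x 2) fun Y => r2 fun _ => Y
  have sw : ∀ A C n m, β C n = 0 → B (β A n) (β C m) = 0 := by
    intro A C n m h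
    rw [hs A n, hs C m, hf n A m C, hs n C, h]
    simp
  have sw' : ∀ A C n m, β A m = 0 → B (β A n) (β C m) = 0 := by
    intro A C n m h
    rw [hB]
    exact sw _ _ _ _ h
  -- product of a general pair with an element killed by a factor
  have k1 : ∀ P Q A n, β P n = 0 → B (β P Q) (β A n) = 0 := by
    intro P Q A n h
    rw [hs A n, hs P Q, hf Q P n A, h]
    simp
  have k2 : ∀ P Q A n, β Q n = 0 → B (β P Q) (β A n) = 0 := by
    intro P Q A n h
    rw [hs P Q]
    exact k1 _ _ _ _ h
  have mx2 : ∀ i j : Fin 3, i ≠ j → ∀ P Q : V, ∃ y : Fin 3 → V, y i = P ∧ y j = Q := by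
    intro i j hij P Q
    exact ⟨fun k => if k = i then P else Q, by simp, by simp [hij.symm]⟩
  have mx3 : ∀ (k : Fin 3) (T : V), ∃ y : Fin 3 → V, y k = T ∧ ∀ i, i ≠ k → y i = x i := by
    intro k T
    exact ⟨Function.update x k T, by simp, fun i hi => by simp [hi]⟩
  have loc : ∀ i j k : Fin 3, i ≠ j → i ≠ k → j ≠ k →
      (∀ y : Fin 3 → V, finrank ℝ (LinearMap.range ((β (y i)).prod (β (y j)))) ≤
        finrank ℝ (LinearMap.range ((β (x i)).prod (β (x j))))) →
      (∀ y : Fin 3 → V,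
        finrank ℝ (LinearMap.range (((β (y i)).prod (β (y j))).prod (cubf B β (y k)))) ≤
        finrank ℝ (LinearMap.range (((β (x i)).prod (β (x j))).prod (cubf B β (x k))))) →
      ∃ n m, β (x i) n = 0 ∧ β (x j) n = 0 ∧ β (x i) m = 0 ∧ B (β (x k) (x k)) (β (x k) n) ≠ 0 ∧
        B (β (x k) (x j)) (β (x k) m) ≠ 0 := by
    intro i j k hij hik hjk h2 h3
    apply local_triple B hB hnd β hs hf hS hlt
    · intro P Q
      obtain ⟨y, rfl, rfl⟩ := mx2 i j hij P Q
      exact h2 y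
    · intro T
      obtain ⟨y, rfl, hy⟩ := mx3 k T
      rw [← hy i hik, ← hy j hjk]
      have := h3 y
      rwa [← hy i hik, ← hy j hjk] at this
  obtain ⟨n0, m0, a1, a2, a3, a4, a5⟩ := loc 2 1 0 (by decide) (by decide) (by decide) p0 q0
  obtain ⟨n1, m1, b1, b2, b3, b4, b5⟩ := loc 0 2 1 (by decide) (by decide) (by decide) p1 q1
  obtain ⟨n2, m2, c1, c2, c3, c4, c5⟩ := loc 1 0 2 (by decide) (by decide) (by decide) p2 q2
  refine hiso ![β (x 0) n0, β (x 1) n1, β (x 2) n2, β (x 0) m0, β (x 1) m1, β (x 2) m2] ?_ ?_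
  · rw [Fintype.linearIndependent_iff]
    intro g hg
    simp only [Fin.sum_univ_six, Matrix.cons_val] at hg
    have ap : ∀ w : W, _ := fun w => congrArg (B w) hg
    simp only [map_add, map_smul, smul_eq_mul, map_zero] at ap
    have g3 : g 3 = 0 := by
      have := ap (β (x 0) (x 1))
      rw [k2 _ _ _ n0 a2, k1 _ _ _ n1 b1, k1 _ _ _ n2 c2, k1 _ _ _ m1 b3, k2 _ _ _ m2 c3] at this
      simpa [a5] using this
    have g4 : g 4 = 0 := by
      have := ap (β (x 1) (x 2))
      rw [k1 _ _ _ n0 a2, k2 _ _ _ n1 b2, k1 _ _ _ n2 c1, k2 _ _ _ m0 a3, k1 _ _ _ m2 c3] at this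
      simpa [b5] using this
    have g5 : g 5 = 0 := by
      have := ap (β (x 2) (x 0))
      rw [k1 _ _ _ n0 a1, k1 _ _ _ n1 b2, k2 _ _ _ n2 c2, k1 _ _ _ m0 a3, k2 _ _ _ m1 b3] at this
      simpa [c5] using this
    have g0 : g 0 = 0 := by
      have := ap (β (x 0) (x 0))
      rw [k1 _ _ _ n1 b1, k1 _ _ _ n2 c2, g3, g4, g5] at this
      simpa [a4] using this
    have g1 : g 1 = 0 := by
      have := ap (β (x 1) (x 1))
      rw [k1 _ _ _ n0 a2, k1 _ _ _ n2 c1, g3, g4, g5] at this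
      simpa [b4] using this
    have g2 : g 2 = 0 := by
      have := ap (β (x 2) (x 2))
      rw [k1 _ _ _ n0 a1, k1 _ _ _ n1 b2, g3, g4, g5] at this
      simpa [c4] using this
    intro i
    fin_cases i <;> assumption
  · intro i j
    fin_cases i <;> fin_cases j <;> simp only [Fin.reduceFinMk, Matrix.cons_val] <;>
    first
    | (apply i0 <;> assumption)
    | (apply i1 <;> assumption)
    | (apply i2 <;> assumption)
    | (apply sw <;> assumption)
    | (apply sw' <;> assumption)
end

section
variable {W : Type*} [AddCommGroup W] [Module ℝ W] [FiniteDimensional ℝ W]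

lemma orth_sum (B : LinearMap.BilinForm ℝ W) {ι : Type*} [Fintype ι] (e : ι → W)
    (ho : ∀ i j, i ≠ j → B (e i) (e j) = 0) (c : ι → ℝ) :
    B (∑ i, c i • e i) (∑ i, c i • e i) = ∑ i, c i ^ 2 * B (e i) (e i) := by
  classical
  simp only [map_sum, LinearMap.sum_apply, map_smul, LinearMap.smul_apply, smul_eq_mul]
  refine Finset.sum_congr rfl fun i _ => ?_
  rw [Finset.sum_eq_single i]
  · ring
  · intro j _ hj
    rw [ho _ _ hj]
    simp
  · simp

lemma orth_def (B : LinearMap.BilinForm ℝ W) {ι : Type*} [Fintype ι] (e : ι → W) (ε : ℝ)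
    (ho : ∀ i j, i ≠ j → B (e i) (e j) = 0) (hp : ∀ i, 0 < ε * B (e i) (e i)) :
    LinearIndependent ℝ e ∧ ∀ x ∈ span ℝ (Set.range e), 0 ≤ ε * B x x ∧ (ε * B x x ≤ 0 → x = 0) := by
  have key : ∀ c : ι → ℝ, 0 ≤ ε * B (∑ i, c i • e i) (∑ i, c i • e i) ∧
      (ε * B (∑ i, c i • e i) (∑ i, c i • e i) ≤ 0 → ∀ i, c i = 0) := by
    intro c
    rw [orth_sum B e ho, Finset.mul_sum]
    have h0 : ∀ i ∈ Finset.univ, 0 ≤ ε * (c i ^ 2 * B (e i) (e i)) := fun i _ => by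
      have := mul_nonneg (sq_nonneg (c i)) (hp i).le
      linarith
    refine ⟨Finset.sum_nonneg h0, fun h i => ?_⟩
    have h1 := (Finset.sum_eq_zero_iff_of_nonneg h0).1 (le_antisymm h (Finset.sum_nonneg h0)) i
      (Finset.mem_univ i)
    have h2 : c i ^ 2 * (ε * B (e i) (e i)) = 0 := by linarith
    rcases mul_eq_zero.1 h2 with h3 | h3
    · simpa using h3
    · exact absurd h3 (hp i).ne'
  refine ⟨?_, ?_⟩
  · rw [Fintype.linearIndependent_iff]
    intro c hc
    exact (key c).2 (by simp [hc])
  · intro x hx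
    obtain ⟨c, rfl⟩ := (Submodule.mem_span_range_iff_exists_fun ℝ).1 hx
    refine ⟨(key c).1, fun h => ?_⟩
    simp [(key c).2 h]

lemma card_add_le {P Q : Submodule ℝ W} (h : ∀ x ∈ P, x ∈ Q → x = 0) :
    finrank ℝ P + finrank ℝ Q ≤ finrank ℝ W := by
  apply Submodule.finrank_add_finrank_le_of_disjoint
  rw [Submodule.disjoint_def]
  exact h

lemma type_finrank {B : LinearMap.BilinForm ℝ W} {r q : ℕ} (h : BilinFormHasType B r q) :
    finrank ℝ W = r + q := by
  obtain ⟨b, -⟩ := h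
  simpa using finrank_eq_card_basis b

lemma type_le_left {B : LinearMap.BilinForm ℝ W} {r q : ℕ} (h : BilinFormHasType B r q)
    {ι : Type*} [Fintype ι] (e : ι → W) (he : LinearIndependent ℝ e)
    (hn : ∀ x ∈ span ℝ (Set.range e), B x x ≤ 0) : Fintype.card ι ≤ r := by
  have hd := type_finrank h
  obtain ⟨b, ho, h1, h2⟩ := h
  obtain ⟨hl, hp⟩ := orth_def B (fun j => b (Sum.inr j)) 1
    (fun i j hij => ho _ _ (by simpa using hij)) (fun j => by simpa using h2 j)
  have := card_add_le (P := span ℝ (Set.range e)) (Q := span ℝ (Set.range fun j => b (Sum.inr j)))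
    (fun x hx hx' => (hp x hx').2 (by simpa using hn x hx))
  rw [finrank_span_eq_card he, finrank_span_eq_card hl, hd] at this
  simp at this
  omega

lemma type_le_right {B : LinearMap.BilinForm ℝ W} {r q : ℕ} (h : BilinFormHasType B r q)
    {ι : Type*} [Fintype ι] (e : ι → W) (he : LinearIndependent ℝ e)
    (hn : ∀ x ∈ span ℝ (Set.range e), 0 ≤ B x x) : Fintype.card ι ≤ q := by
  have hd := type_finrank h
  obtain ⟨b, ho, h1, h2⟩ := h
  obtain ⟨hl, hp⟩ := orth_def B (fun j => b (Sum.inl j)) (-1)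
    (fun i j hij => ho _ _ (by simpa using hij)) (fun j => by simpa using h1 j)
  have := card_add_le (P := span ℝ (Set.range e)) (Q := span ℝ (Set.range fun j => b (Sum.inl j)))
    (fun x hx hx' => (hp x hx').2 (by simpa using hn x hx))
  rw [finrank_span_eq_card he, finrank_span_eq_card hl, hd] at this
  simp at this
  omega

lemma exists_type (B : LinearMap.BilinForm ℝ W) (hB : ∀ x y, B x y = B y x)
    (hnd : B.Nondegenerate) : ∃ r q, BilinFormHasType B r q := by
  classical
  obtain ⟨v, hv⟩ := LinearMap.BilinForm.exists_orthogonal_basis (B := B) ⟨hB⟩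
  have hne := LinearMap.BilinForm.iIsOrtho.not_isOrtho_basis_self_of_nondegenerate hv hnd
  let p : Fin (finrank ℝ W) → Prop := fun i => B (v i) (v i) < 0
  let E : Fin (finrank ℝ W) ≃ Fin (Fintype.card {i // p i}) ⊕ Fin (Fintype.card {i // ¬ p i}) :=
    (Equiv.sumCompl p).symm.trans
      (Equiv.sumCongr (Fintype.equivFin _) (Fintype.equivFin _))
  refine ⟨_, _, v.reindex E, ?_, ?_, ?_⟩
  · intro i j hij
    simp only [Basis.reindex_apply]
    exact hv (fun h => hij (E.symm.injective h))
  · intro i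
    simp only [Basis.reindex_apply]
    exact ((Fintype.equivFin {i // p i}).symm i).2
  · intro j
    simp only [Basis.reindex_apply]
    have := ((Fintype.equivFin {i // ¬ p i}).symm j).2
    exact lt_of_le_of_ne (not_lt.1 this) (hne _).symm

lemma type_nondeg {B : LinearMap.BilinForm ℝ W} {r q : ℕ} (h : BilinFormHasType B r q) :
    B.Nondegenerate := by
  obtain ⟨b, ho, h1, h2⟩ := h
  rw [LinearMap.BilinForm.iIsOrtho.nondegenerate_iff_not_isOrtho_basis_self B b ho]
  rintro (i | j)
  · exact (h1 i).ne
  · exact (h2 j).ne'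

lemma hyper (B : LinearMap.BilinForm ℝ W) (hB : ∀ x y, B x y = B y x)
    (hnd : B.Nondegenerate) (U : Submodule ℝ W) (hU : ∀ x ∈ U, ∀ y ∈ U, B x y = 0) :
    ∃ W₁ : Submodule ℝ W, U ≤ W₁ ∧ BilinFormHasType (B.restrict W₁) (finrank ℝ U) (finrank ℝ U) ∧
      ∀ x ∈ W₁, (∀ y ∈ U, B x y = 0) → x ∈ U := by
  classical
  let b := finBasis ℝ U
  let u : Fin (finrank ℝ U) → W := fun i => b i
  have hu : LinearIndependent ℝ u := b.linearIndependent.map' U.subtype (by simp)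
  have huU : ∀ i, u i ∈ U := fun i => (b i).2
  have hspan : span ℝ (Set.range u) = U := by
    have := congrArg (Submodule.map U.subtype) b.span_eq
    rw [Submodule.map_span, ← Set.range_comp] at this
    simpa [Function.comp_def] using this
  obtain ⟨φ, hφ⟩ := exists_dual_fam u hu
  let z : Fin (finrank ℝ U) → W := fun j => (B.toDual hnd).symm (φ j)
  have hz : ∀ i j, B (z i) (u j) = if i = j then 1 else 0 := by
    intro i j
    simp only [z]
    rw [LinearMap.BilinForm.apply_toDual_symm_apply, hφ]
  let v : Fin (finrank ℝ U) → W := fun j => z j - (1 / 2 : ℝ) • ∑ k, B (z j) (z k) • u k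
  have huu : ∀ i j, B (u i) (u j) = 0 := fun i j => hU _ (huU i) _ (huU j)
  have hvu : ∀ i j, B (v i) (u j) = if i = j then 1 else 0 := by
    intro i j
    simp [v, hz, huu]
  have huv : ∀ i j, B (u i) (v j) = if i = j then 1 else 0 := by
    intro i j
    rw [hB, hvu]
    simp [eq_comm]
  have hvv : ∀ i j, B (v i) (v j) = 0 := by
    intro i j
    have h1 : B (v i) (v j) = B (v i) (z j) - (1 / 2 : ℝ) * B (z j) (z i) := by
      conv_lhs => rw [show v j = z j - (1 / 2 : ℝ) • ∑ k, B (z j) (z k) • u k from rfl]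
      simp [hvu]
    have h2 : ∀ k, B (u k) (z j) = if j = k then 1 else 0 := fun k => by rw [hB, hz]
    rw [h1]
    simp [v, h2]
    rw [hB (z j) (z i)]
    ring
  let e : Fin (finrank ℝ U) ⊕ Fin (finrank ℝ U) → W :=
    Sum.elim (fun i => u i - v i) (fun i => u i + v i)
  have ho : ∀ i j, i ≠ j → B (e i) (e j) = 0 := by
    rintro (i | i) (j | j) hij
    · have : i ≠ j := by simpa using hij
      simp [e, huu, hvv, hvu, huv, this]
    · simp [e, huu, hvv, hvu, huv]
    · simp [e, huu, hvv, hvu, huv]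
    · have : i ≠ j := by simpa using hij
      simp [e, huu, hvv, hvu, huv, this]
  have hneg : ∀ i, B (e (Sum.inl i)) (e (Sum.inl i)) < 0 := by
    intro i
    simp [e, huu, hvv, hvu, huv] <;> norm_num
  have hpos : ∀ i, 0 < B (e (Sum.inr i)) (e (Sum.inr i)) := by
    intro i
    simp [e, huu, hvv, hvu, huv] <;> norm_num
  have hli : LinearIndependent ℝ e := by
    apply LinearMap.BilinForm.linearIndependent_of_iIsOrtho (B := B) ho
    rintro (i | i)
    · exact (hneg i).ne
    · exact (hpos i).ne'
  refine ⟨span ℝ (Set.range e), ?_, ⟨Basis.span hli, ?_, ?_, ?_⟩, ?_⟩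
  · refine hspan.symm.le.trans (Submodule.span_le.2 ?_)
    rintro _ ⟨i, rfl⟩
    have : u i = (1 / 2 : ℝ) • (e (Sum.inl i) + e (Sum.inr i)) := by
      simp only [e, Sum.elim_inl, Sum.elim_inr]
      module
    rw [this]
    exact Submodule.smul_mem _ _ (Submodule.add_mem _ (subset_span ⟨_, rfl⟩) (subset_span ⟨_, rfl⟩))
  · intro i j hij
    simpa [Basis.span_apply] using ho i j hij
  · intro i
    simpa [Basis.span_apply] using hneg i
  · intro i
    simpa [Basis.span_apply] using hpos i
  · intro x hx hxU
    obtain ⟨c, rfl⟩ := (Submodule.mem_span_range_iff_exists_fun ℝ).1 hx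
    have hc : ∀ k, c (Sum.inr k) = c (Sum.inl k) := by
      intro k
      have := hxU (u k) (huU k)
      simp [Fintype.sum_sum_type, e, huu, hvu, sub_eq_add_neg] at this
      linarith
    rw [Fintype.sum_sum_type, ← Finset.sum_add_distrib]
    apply Submodule.sum_mem
    intro i _
    rw [hc i, ← smul_add]
    have : e (Sum.inl i) + e (Sum.inr i) = (2 : ℝ) • u i := by
      simp only [e, Sum.elim_inl, Sum.elim_inr]
      module
    rw [this]
    exact U.smul_mem _ (U.smul_mem _ (huU i))

lemma compl_type (B : LinearMap.BilinForm ℝ W) (hB : ∀ x y, B x y = B y x) {r q l : ℕ}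
    (h : BilinFormHasType B r q) (W₁ W₂ : Submodule ℝ W) (hc : IsCompl W₁ W₂)
    (h12 : ∀ x ∈ W₁, ∀ y ∈ W₂, B x y = 0) (h1 : BilinFormHasType (B.restrict W₁) l l)
    (h2 : (B.restrict W₂).Nondegenerate) :
    BilinFormHasType (B.restrict W₂) (r - l) (q - l) := by
  obtain ⟨r', q', h'⟩ := exists_type (B.restrict W₂) (fun x y => hB _ _) h2
  have d0 := type_finrank h
  have d1 := type_finrank h1
  have d2 := type_finrank h'
  have d3 := Submodule.finrank_add_eq_of_isCompl hc
  have h'' := h'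
  obtain ⟨b, bo, bn, bp⟩ := h1
  obtain ⟨c, co, cn, cp⟩ := h'
  simp only [LinearMap.BilinForm.restrict_apply, LinearMap.domRestrict_apply] at bo bn bp co cn cp
  have k1 : l + r' ≤ r := by
    obtain ⟨hl, hd⟩ := orth_def B (Sum.elim (fun i => (b (Sum.inl i) : W)) (fun i => (c (Sum.inl i) : W)))
      (-1) (by
        rintro (i | i) (j | j) hij
        · exact bo _ _ (by simpa using hij)
        · exact h12 _ (b _).2 _ (c _).2
        · rw [hB]
          exact h12 _ (b _).2 _ (c _).2
        · exact co _ _ (by simpa using hij)) (by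
        rintro (i | i)
        · simpa using bn i
        · simpa using cn i)
    simpa using type_le_left h _ hl fun x hx => by simpa using (hd x hx).1
  have k2 : l + q' ≤ q := by
    obtain ⟨hl, hd⟩ := orth_def B (Sum.elim (fun i => (b (Sum.inr i) : W)) (fun i => (c (Sum.inr i) : W)))
      1 (by
        rintro (i | i) (j | j) hij
        · exact bo _ _ (by simpa using hij)
        · exact h12 _ (b _).2 _ (c _).2
        · rw [hB]
          exact h12 _ (b _).2 _ (c _).2
        · exact co _ _ (by simpa using hij)) (by
        rintro (i | i)
        · simpa using bp i
        · simpa using cp i)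
    simpa using type_le_right h _ hl fun x hx => by simpa using (hd x hx).1
  have e1 : r' = r - l := by omega
  have e2 : q' = q - l := by omega
  rw [← e1, ← e2]
  exact h''
end

/-- Assertion in the proof of Lemma 2.3. Let `d ≤ 5`, `n > 2d+3`, `V` an
`n`-dimensional real vector space and `W` a `(2d+3)`-dimensional real vector space with a
nondegenerate symmetric bilinear form of type `(d+1, d+2)`. Let `β : V × V → W` be flat
symmetric with `β(X,X) ≠ 0` for `X ≠ 0`. Then `ℓ := dim (S(β) ∩ S(β)⊥) ≥ 1` and there is an
orthogonal decomposition `W = W₁ ⊕ W₂` with the form of type `(ℓ,ℓ)` on `W₁` and of type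
`(d-ℓ+1, d-ℓ+2)` on `W₂`, and symmetric bilinear maps `ω₁, ω₂` into `W₁, W₂` with
`β = ω₁ + ω₂`, `ω₁` nonzero and null, and `ω₂` flat with `dim N(ω₂) ≥ n - dim W₂`. -/
theorem statement6 {V W : Type*} [AddCommGroup V] [Module ℝ V] [FiniteDimensional ℝ V]
    [AddCommGroup W] [Module ℝ W] [FiniteDimensional ℝ W]
    (d n : ℕ) (hd : d ≤ 5) (hn : 2 * d + 3 < n)
    (hV : finrank ℝ V = n) (hW : finrank ℝ W = 2 * d + 3)
    (B : LinearMap.BilinForm ℝ W) (hBsymm : ∀ x y, B x y = B y x) (hBnd : B.Nondegenerate)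
    (htype : BilinFormHasType B (d + 1) (d + 2))
    (β : V →ₗ[ℝ] V →ₗ[ℝ] W) (hsymm : ∀ X Y, β X Y = β Y X)
    (hflat : ∀ X Y Z U, B (β X Y) (β Z U) = B (β X U) (β Y Z))
    (hne : ∀ X : V, X ≠ 0 → β X X ≠ 0)
    (S : Submodule ℝ W) (hS : S = span ℝ {w | ∃ X Y, β X Y = w})
    (ℓ : ℕ) (hℓ : ℓ = finrank ℝ (S ⊓ B.orthogonal S : Submodule ℝ W)) :
    1 ≤ ℓ ∧
    ∃ (W₁ W₂ : Submodule ℝ W) (_ : IsCompl W₁ W₂) (ω₁ ω₂ : V →ₗ[ℝ] V →ₗ[ℝ] W),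
      (∀ x ∈ W₁, ∀ y ∈ W₂, B x y = 0) ∧
      BilinFormHasType (B.restrict W₁) ℓ ℓ ∧
      BilinFormHasType (B.restrict W₂) (d + 1 - ℓ) (d + 2 - ℓ) ∧
      (∀ X Y, ω₁ X Y ∈ W₁) ∧ (∀ X Y, ω₂ X Y ∈ W₂) ∧
      (∀ X Y, ω₁ X Y = ω₁ Y X) ∧ (∀ X Y, ω₂ X Y = ω₂ Y X) ∧
      (∀ X Y, β X Y = ω₁ X Y + ω₂ X Y) ∧
      ω₁ ≠ 0 ∧
      (∀ X Y Z U, B (ω₁ X Y) (ω₁ Z U) = 0) ∧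
      (∀ X Y Z U, B (ω₂ X Y) (ω₂ Z U) = B (ω₂ X U) (ω₂ Y Z)) ∧
      n ≤ finrank ℝ (⨅ X, LinearMap.ker (ω₂ X) : Submodule ℝ V) + finrank ℝ W₂ := by
  have hr : B.IsRefl := fun x y h => by rw [hBsymm]; exact h
  have hβS : ∀ X Y, β X Y ∈ S := fun X Y => by
    rw [hS]
    exact subset_span ⟨X, Y, rfl⟩
  have horth : ∀ w : W, (∀ C D, B w (β C D) = 0) → w ∈ B.orthogonal S := by
    intro w hw
    rw [LinearMap.BilinForm.mem_orthogonal_iff]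
    intro s hs
    change B s w = 0
    rw [hS] at hs
    induction hs using Submodule.span_induction with
    | mem x hx =>
      obtain ⟨C, D, rfl⟩ := hx
      rw [hBsymm]
      exact hw C D
    | zero => simp
    | add x y _ _ hx hy => simp [hx, hy]
    | smul a x _ hx => simp [hx]
  have hl1 : 1 ≤ ℓ := by
    by_contra hlt
    have h0 : S ⊓ B.orthogonal S = ⊥ := by
      apply Submodule.finrank_eq_zero.1
      omega
    obtain ⟨X, hX⟩ := (gnrc_rank (fun x : V => β x)
      (fun v φ => LPoly.lin (φ ∘ₗ (β.flip v)))).ex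
    obtain ⟨m, hm, hm0⟩ : ∃ m ∈ LinearMap.ker (β X), m ≠ 0 := by
      apply Submodule.exists_mem_ne_zero_of_ne_bot
      intro hk
      have h1 := LinearMap.finrank_range_add_finrank_ker (β X)
      have h2 := Submodule.finrank_le (LinearMap.range (β X))
      rw [hk, finrank_bot] at h1
      omega
    apply hne m hm0
    have : β m m ∈ S ⊓ B.orthogonal S := by
      refine ⟨hβS _ _, horth _ fun C D => ?_⟩
      obtain ⟨E, hE⟩ := moore (β X) (β C) (by
        intro t
        have := hX (X + t • C)
        rw [map_add, map_smul] at this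
        exact this) m hm
      rw [hflat m m C D, hsymm m C, ← hE, hsymm m D, hBsymm, hflat X E D m, hm]
      simp
    rw [h0] at this
    simpa using this
  refine ⟨hl1, ?_⟩
  set U : Submodule ℝ W := S ⊓ B.orthogonal S with hUdef
  have hSU : ∀ x ∈ S, ∀ y ∈ U, B x y = 0 := fun x hx y hy => hy.2 x hx
  have hU : ∀ x ∈ U, ∀ y ∈ U, B x y = 0 := fun x hx y hy => hSU x hx.1 y hy
  obtain ⟨W₁, hUW, ht1, hWU⟩ := hyper B hBsymm hBnd U hU
  rw [← hℓ] at ht1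
  have hc : IsCompl W₁ (B.orthogonal W₁) :=
    LinearMap.BilinForm.isCompl_orthogonal_of_restrict_nondegenerate hr (type_nondeg ht1)
  have h12 : ∀ x ∈ W₁, ∀ y ∈ B.orthogonal W₁, B x y = 0 := fun x hx y hy => hy x hx
  have hnd2 : (B.restrict (B.orthogonal W₁)).Nondegenerate := by
    rw [LinearMap.BilinForm.restrict_nondegenerate_iff_isCompl_orthogonal hr,
      LinearMap.BilinForm.orthogonal_orthogonal hBnd hr]
    exact hc.symm
  have ht2 := compl_type B hBsymm htype W₁ _ hc h12 ht1 hnd2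
  generalize hW₂ : B.orthogonal W₁ = W₂ at *
  let π₁ := W₁.projection W₂ hc
  let π₂ := W₂.projectionOnto W₁ hc.symm
  let ω := β.compr₂ π₂
  have hω : ∀ X Y, ω X Y = π₂ (β X Y) := fun X Y => rfl
  have hsum : ∀ w : W, w = π₁ w + (π₂ w : W) := fun w => by
    have := Submodule.projection_add_projection_eq_self hc w
    exact this.symm
  have hm1 : ∀ w, π₁ w ∈ W₁ := fun w => (W₁.projectionOnto W₂ hc w).2
  have hU1 : ∀ w ∈ S, π₁ w ∈ U := by
    intro w hw
    refine hWU _ (hm1 w) fun y hy => ?_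
    have h1 := hSU w hw y hy
    have h2 := h12 y (hUW hy) (π₂ w) (π₂ w).2
    rw [hsum w, map_add, LinearMap.add_apply, hBsymm (π₂ w : W) y, h2, add_zero] at h1
    exact h1
  have hprod : ∀ w ∈ S, ∀ w' ∈ S, B (π₂ w) (π₂ w') = B w w' := by
    intro w hw w' hw'
    conv_rhs => rw [hsum w, hsum w']
    simp only [map_add, LinearMap.add_apply]
    rw [hU _ (hU1 w hw) _ (hU1 w' hw'), h12 _ (hm1 w) _ (π₂ w').2, hBsymm (π₂ w : W) (π₁ w'),
      h12 _ (hm1 w') _ (π₂ w).2]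
    ring
  have hfl : ∀ X Y Z T, B (ω X Y) (ω Z T) = B (ω X T) (ω Y Z) := by
    intro X Y Z T
    simp only [hω]
    rw [hprod _ (hβS _ _) _ (hβS _ _), hprod _ (hβS _ _) _ (hβS _ _), hflat]
  have hmain := main_lemma (B.restrict W₂) (fun x y => hBsymm _ _) hnd2 ω
    (fun X Y => by rw [hω, hω, hsymm]) hfl (by
      intro m A h
      rw [hω, Submodule.projectionOnto_apply_eq_zero_iff]
      apply hUW
      refine ⟨hβS _ _, horth _ fun C D => ?_⟩
      rw [← hprod _ (hβS _ _) _ (hβS _ _)]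
      exact h C D) (by
      intro e he h
      have := type_le_left ht2 e he (by
        intro x hx
        obtain ⟨c, rfl⟩ := (Submodule.mem_span_range_iff_exists_fun ℝ).1 hx
        simp only [map_sum, LinearMap.sum_apply, map_smul, LinearMap.smul_apply, h]
        simp)
      simp at this
      omega)
  refine ⟨W₁, W₂, hc, β.compr₂ π₁, ω.compr₂ W₂.subtype, h12, ht1, ht2, fun X Y => hm1 _,
    fun X Y => (ω X Y).2, ?_, ?_, ?_, ?_, ?_, ?_, ?_⟩
  · intro X Y
    simp [hsymm X Y]
  · intro X Y
    simp [hω, hsymm X Y]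
  · intro X Y
    exact hsum (β X Y)
  · intro h0
    have hS2 : S ≤ W₂ := by
      rw [hS, Submodule.span_le]
      rintro _ ⟨X, Y, rfl⟩
      have : π₁ (β X Y) = 0 := by
        have := LinearMap.congr_fun (LinearMap.congr_fun h0 X) Y
        simpa using this
      have h3 := hsum (β X Y)
      rw [this, zero_add] at h3
      rw [h3]
      exact (π₂ _).2
    have hbot : U = ⊥ := by
      rw [eq_bot_iff]
      intro x hx
      have := hc.inf_eq_bot
      rw [← this]
      exact ⟨hUW hx, hS2 hx.1⟩
    rw [hbot, finrank_bot] at hℓ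
    omega
  · intro X Y Z T
    exact hU _ (hU1 _ (hβS _ _)) _ (hU1 _ (hβS _ _))
  · exact hfl
  · have hk : (⨅ X, LinearMap.ker ((ω.compr₂ W₂.subtype) X) : Submodule ℝ V) =
        ⨅ X, LinearMap.ker (ω X) := by
      congr 1
      ext X x
      simp
    rw [hk, ← hV]
    exact hmain
end

section
/- Let V be a real vector space and L a real vector space with a symmetric bilinear form ⟨·,·⟩. Let ω : V × V → L be a symmetric bilinear map and let K assign to each X ∈ V a linear map K(X) : L → L, such that: (i) K(X)ω(Y,Z) = K(Y)ω(X,Z) for all X, Y, Z ∈ V; and (ii) ⟨K(X)ω(Y,Z), ω(W,U)⟩ = −⟨ω(Y,Z), K(X)ω(W,U)⟩ for all X, Y, Z, W, U ∈ V. Then ⟨K(X)ω(Y,Z), ω(W,U)⟩ = 0 for all X, Y, Z, W, U ∈ V. -/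
/-- the algebraic identity in the proof of Lemma 2.11. Let `ω : V × V → L`
be a symmetric bilinear map into a space `L` with a symmetric bilinear form, and let `K`
assign to each `X ∈ V` an endomorphism `K(X)` of `L` such that `K(X)ω(Y,Z) = K(Y)ω(X,Z)` and
`⟨K(X)ω(Y,Z), ω(W,U)⟩ = -⟨ω(Y,Z), K(X)ω(W,U)⟩` for all arguments. Then
`⟨K(X)ω(Y,Z), ω(W,U)⟩ = 0` for all `X, Y, Z, W, U ∈ V`. -/
theorem statement7 {V L : Type*} [AddCommGroup V] [Module ℝ V] [AddCommGroup L] [Module ℝ L]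
    (B : LinearMap.BilinForm ℝ L) (hBsymm : ∀ x y, B x y = B y x)
    (ω : V →ₗ[ℝ] V →ₗ[ℝ] L) (hsymm : ∀ X Y, ω X Y = ω Y X)
    (K : V → L →ₗ[ℝ] L)
    (h1 : ∀ X Y Z, K X (ω Y Z) = K Y (ω X Z))
    (h2 : ∀ X Y Z W' U, B (K X (ω Y Z)) (ω W' U) = -B (ω Y Z) (K X (ω W' U))) :
    ∀ X Y Z W' U, B (K X (ω Y Z)) (ω W' U) = 0 := by
  intro a b c d e
  have s : ∀ X Y Z W U, B (K X (ω Y Z)) (ω W U) = -B (K X (ω W U)) (ω Y Z) := by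
    intro X Y Z W U
    rw [h2, hBsymm]
  have e1 := s a b c d e
  have e2 := s d a e b c
  have e3 := s b c d a e
  have e4 := s e a b c d
  have e5 := s c d e a b
  have f1 : K d (ω a e) = K a (ω d e) := h1 d a e
  have f2 : K d (ω b c) = K b (ω c d) := by rw [h1 d b c, hsymm d c]
  have f3 : K b (ω a e) = K e (ω a b) := by rw [hsymm a e, h1 b e a, hsymm b a]
  have f4 : K e (ω c d) = K c (ω d e) := by rw [h1 e c d, hsymm e d]
  have f5 : K c (ω a b) = K a (ω b c) := by rw [h1 c a b, hsymm c b]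
  rw [f1, f2] at e2
  rw [f3] at e3
  rw [f4] at e4
  rw [f5] at e5
  linarith
end
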